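/- arXiv:1810.06680 — 2 statements merged into one kernel-verified Lean document; each statement's English description precedes it below -/
import Mathlib

section
/- (Theorem on M_α, first weight condition) Let 0≤α<mn and q = n/(mn−α). Let u_1,…,u_m and v be weights on ℝ^n, write u⃗^{mq} = (u_1^{mq},…,u_m^{mq}) and ν = ∏_{i=1}^m u_i^q. Suppose u⃗^{mq} ∈ A_{(1,…,1)} and ν v^q ∈ A_∞. Then there exists a constant C such that for all f_1,…,f_m, ‖M_α(f⃗)/v‖_{L^{q,∞}(ν v^q)} ≤ C ∏_{i=1}^m ‖f_i‖_{L^1(u_i)}. -/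
open MeasureTheory ENNReal Set

noncomputable section

/-- Euclidean space `ℝ^n`. -/
abbrev ESp (n : ℕ) := EuclideanSpace ℝ (Fin n)

/-- An axis-parallel cube with positive finite side length. -/
def IsCube {n : ℕ} (Q : Set (ESp n)) : Prop :=
  ∃ (c : Fin n → ℝ) (h : ℝ), 0 < h ∧ Q = {x : ESp n | ∀ i, c i ≤ x i ∧ x i ≤ c i + h}

/-- The measure `w(E) = ∫_E w` associated to a weight `w`. -/
def wMeas {n : ℕ} (w : ESp n → ℝ) (E : Set (ESp n)) : ℝ≥0∞ :=
  ∫⁻ x in E, ENNReal.ofReal (w x)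

/-- A weight: a nonnegative locally integrable function, positive (and finite) a.e. -/
def IsWeight {n : ℕ} (w : ESp n → ℝ) : Prop :=
  Measurable w ∧ (∀ x, 0 ≤ w x) ∧ (∀ᵐ x ∂(volume : Measure (ESp n)), 0 < w x) ∧
    ∀ Q : Set (ESp n), IsCube Q → wMeas w Q < ⊤

/-- `C` is an admissible `A₁` constant for `w`. -/
def A1Const {n : ℕ} (w : ESp n → ℝ) (C : ℝ≥0∞) : Prop :=
  ∀ Q : Set (ESp n), IsCube Q →
    (volume Q)⁻¹ * wMeas w Q ≤ C * essInf (fun x => ENNReal.ofReal (w x)) (volume.restrict Q)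

/-- The Muckenhoupt class `A₁`. -/
def IsA1 {n : ℕ} (w : ESp n → ℝ) : Prop := ∃ C : ℝ≥0∞, C < ⊤ ∧ A1Const w C

/-- The Muckenhoupt class `A_p`, `1 < p < ∞`. -/
def IsAp {n : ℕ} (w : ESp n → ℝ) (p : ℝ) : Prop :=
  ∃ C : ℝ≥0∞, C < ⊤ ∧ ∀ Q : Set (ESp n), IsCube Q →
    ((volume Q)⁻¹ * wMeas w Q) *
      ((volume Q)⁻¹ * ∫⁻ x in Q, ENNReal.ofReal (w x) ^ (1 - p / (p - 1))) ^ (p - 1) ≤ C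

/-- The class `A_∞ = ⋃_{p ≥ 1} A_p`. -/
def IsAinfty {n : ℕ} (w : ESp n → ℝ) : Prop :=
  IsA1 w ∨ ∃ p : ℝ, 1 < p ∧ IsAp w p

/-- The Hardy–Littlewood maximal function (over cubes). -/
def maxFn {n : ℕ} (f : ESp n → ℝ) (x : ESp n) : ℝ≥0∞ :=
  ⨆ (Q : Set (ESp n)) (_ : IsCube Q) (_ : x ∈ Q),
    (volume Q)⁻¹ * ∫⁻ y in Q, ENNReal.ofReal |f y|

/-- The Fujii–Wilson `A_∞` constant. -/
def FW {n : ℕ} (w : ESp n → ℝ) : ℝ≥0∞ :=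
  ⨆ (Q : Set (ESp n)) (_ : IsCube Q),
    (wMeas w Q)⁻¹ * ∫⁻ x in Q, maxFn (Q.indicator w) x

/-- The weighted weak `L^{q,∞}(w)` quasinorm of `g`. -/
def wnorm {n : ℕ} (g : ESp n → ℝ≥0∞) (q : ℝ) (w : ESp n → ℝ) : ℝ≥0∞ :=
  ⨆ (t : ℝ) (_ : 0 < t), ENNReal.ofReal t * (wMeas w {x | ENNReal.ofReal t < g x}) ^ (1 / q)

/-- The weighted `L¹(w)` norm. -/
def L1norm {n : ℕ} (f : ESp n → ℝ) (w : ESp n → ℝ) : ℝ≥0∞ :=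
  ∫⁻ x, ENNReal.ofReal (|f x| * w x)

/-- The fractional maximal operator `M_α`. -/
def fracM {n : ℕ} (α : ℝ) (f : ESp n → ℝ) (x : ESp n) : ℝ≥0∞ :=
  ⨆ (Q : Set (ESp n)) (_ : IsCube Q) (_ : x ∈ Q),
    ((volume Q) ^ (1 - α / (n : ℝ)))⁻¹ * ∫⁻ y in Q, ENNReal.ofReal |f y|

/-- The fractional integral (Riesz potential) `I_α`. -/
def fracI {n : ℕ} (α : ℝ) (f : ESp n → ℝ) (x : ESp n) : ℝ :=
  ∫ y, f y / dist x y ^ ((n : ℝ) - α)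

/-- The multi(sub)linear maximal function `𝓜`. -/
def multiM {n m : ℕ} (f : Fin m → ESp n → ℝ) (x : ESp n) : ℝ≥0∞ :=
  ⨆ (Q : Set (ESp n)) (_ : IsCube Q) (_ : x ∈ Q),
    ∏ i, (volume Q)⁻¹ * ∫⁻ y in Q, ENNReal.ofReal |f i y|

/-- The multi(sub)linear fractional maximal operator `𝓜_α`. -/
def multiMα {n m : ℕ} (α : ℝ) (f : Fin m → ESp n → ℝ) (x : ESp n) : ℝ≥0∞ :=
  ⨆ (Q : Set (ESp n)) (_ : IsCube Q) (_ : x ∈ Q),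
    ∏ i, ((volume Q) ^ (1 - α / ((m : ℝ) * (n : ℝ))))⁻¹ * ∫⁻ y in Q, ENNReal.ofReal |f i y|

/-- The multilinear fractional integral `𝓘_α`. -/
def multiIα {n m : ℕ} (α : ℝ) (f : Fin m → ESp n → ℝ) (x : ESp n) : ℝ :=
  ∫ y : Fin m → ESp n, (∏ i, f i (y i)) / (∑ i, dist x (y i)) ^ ((m : ℝ) * (n : ℝ) - α)

/-- The multilinear class `A_{(1,…,1)}`. -/
def A11 {n m : ℕ} (w : Fin m → ESp n → ℝ) : Prop :=
  ∃ C : ℝ≥0∞, C < ⊤ ∧ ∀ Q : Set (ESp n), IsCube Q →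
    ((volume Q)⁻¹ * ∫⁻ x in Q, ENNReal.ofReal (∏ i, w i x ^ ((m : ℝ)⁻¹))) ^ (m : ℝ) *
      ∏ i, (essInf (fun x => ENNReal.ofReal (w i x)) (volume.restrict Q))⁻¹ ≤ C

/-!
Write `ν = ∏ᵢ uᵢ^q`, `V = v^q`, `W = νV` and `μᵢ(E) = ∫_E |fᵢ| uᵢ / ‖fᵢ‖_{L¹(uᵢ)}`. Bounding each
`uᵢ` below by its essential infimum on a cube `Q`, the `A_{(1,…,1)}` condition shows that the
quantity of `Q` in `M_α(f)`, raised to the power `q` and multiplied by `ν(Q)`, is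
`≲ (∏ᵢ ‖fᵢ‖_{L¹(uᵢ)})^q ∏ᵢ μᵢ(Q)^q`. Since `μᵢ(Q) ≤ 1` and `mq ≥ 1`, the last product is at most
`∑ᵢ μᵢ(Q)`. The multilinear problem thus reduces to a linear one: for every finite measure `μ`,
`W {x | ∃ Q ∋ x, V(x) ν(Q) < μ(Q)} ≲ μ(ℝⁿ)`, where `ν ∈ A₁` and `W ∈ A_∞`.

For the linear problem take the maximal dyadic cubes `J` with `μ(J) > aᵏ ν(J)`, for all `k ∈ ℤ`.
Every `x` of the level set with `V(x) ≠ 0` lies in the triple of such a `J` with `V(x) ≲ aᵏ`. The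
cubes with `μ(J) > θ W(J)` are controlled by the weak type `(1,1)` bound for the dyadic maximal
function relative to `W`. The others are sorted into tiers by the size `θβʳ` of `μ(J) / W(J)`: on
`J` the set `{V ≲ aᵏ}` has a fraction `≲ βʳ` of the `W`-mass, hence, as `W ∈ A_∞`, a fraction of
the volume which decays exponentially in `r`, and hence, iterating the gain obtained when a set is
enlarged to the dyadic cubes in which it is dense, at most a fraction `g⁻ʳ` of the `ν`-mass, with
`g > 1`. For large `a` the cubes `J` are `W`-sparse, so the tier `r` contributes `≲ g⁻ʳ μ(ℝⁿ)`,
which is summable.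
-/

section Boxes

variable {n : ℕ}

lemma volume_setOf_forall_mem (s : Fin n → Set ℝ) :
    volume {x : ESp n | ∀ i, x i ∈ s i} = ∏ i, volume (s i) := by
  have hpre : {x : ESp n | ∀ i, x i ∈ s i} =
      (MeasurableEquiv.toLp 2 (Fin n → ℝ)).symm ⁻¹' univ.pi s := by
    ext x
    simp
  rw [hpre, (EuclideanSpace.volume_preserving_symm_measurableEquiv_toLp
    (Fin n)).measure_preimage_equiv, volume_pi_pi]

lemma measurableSet_setOf_forall_mem {s : Fin n → Set ℝ} (hs : ∀ i, MeasurableSet (s i)) :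
    MeasurableSet {x : ESp n | ∀ i, x i ∈ s i} := by
  simp only [ofPred_forall]
  exact MeasurableSet.iInter fun i => (by fun_prop : Measurable fun x : ESp n => x i) (hs i)

lemma volume_setOf_forall_mem_Icc (c : Fin n → ℝ) (h : ℝ) :
    volume {x : ESp n | ∀ i, c i ≤ x i ∧ x i ≤ c i + h} = ENNReal.ofReal h ^ n := by
  rw [show {x : ESp n | ∀ i, c i ≤ x i ∧ x i ≤ c i + h} =
    {x : ESp n | ∀ i, x i ∈ Icc (c i) (c i + h)} from rfl, volume_setOf_forall_mem]
  simp

variable {Q : Set (ESp n)}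

lemma IsCube.measurableSet (hQ : IsCube Q) : MeasurableSet Q := by
  obtain ⟨c, h, -, rfl⟩ := hQ
  exact measurableSet_setOf_forall_mem fun i => measurableSet_Icc (a := c i) (b := c i + h)

lemma IsCube.volume_ne_zero (hQ : IsCube Q) : volume Q ≠ 0 := by
  obtain ⟨c, h, hh, rfl⟩ := hQ
  rw [volume_setOf_forall_mem_Icc]
  exact pow_ne_zero _ (by simpa using hh)

lemma IsCube.volume_ne_top (hQ : IsCube Q) : volume Q ≠ ⊤ := by
  obtain ⟨c, h, -, rfl⟩ := hQ
  rw [volume_setOf_forall_mem_Icc]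
  finiteness

end Boxes

/-- The half-open dyadic cube `∏ᵢ [2⁻ᵏ zᵢ, 2⁻ᵏ (zᵢ + 1))`, stored through its generation `k` and its
position `z`; a larger generation means a smaller cube. -/
@[ext]
structure DyadicCube (n : ℕ) where
  gen : ℤ
  pos : Fin n → ℤ

namespace DyadicCube

variable {n : ℕ}

instance : Countable (DyadicCube n) :=
  Function.Injective.countable (f := fun I : DyadicCube n => (I.gen, I.pos)) fun I J h => by
    simpa [DyadicCube.ext_iff] using h

/-- The dyadic cube of generation `k` containing the point `x`. -/
def of (k : ℤ) (x : ESp n) : DyadicCube n := ⟨k, fun i => ⌊(2 : ℝ) ^ k * x i⌋⟩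

/-- The points of a dyadic cube. -/
def toSet (I : DyadicCube n) : Set (ESp n) :=
  {x | ∀ i, x i ∈ Ico ((2 : ℝ) ^ (-I.gen) * I.pos i) (2 ^ (-I.gen) * (I.pos i + 1))}

/-- The concentric cube of three times the side length: the union of `I` and its neighbours of the
same generation. -/
def triple (I : DyadicCube n) : Set (ESp n) :=
  {x | ∀ i, x i ∈ Ico ((2 : ℝ) ^ (-I.gen) * (I.pos i - 1)) (2 ^ (-I.gen) * (I.pos i + 2))}

lemma mem_Ico_zpow_neg_mul_iff (k : ℤ) (t a b : ℝ) :
    t ∈ Ico ((2 : ℝ) ^ (-k) * a) (2 ^ (-k) * b) ↔ a ≤ 2 ^ k * t ∧ 2 ^ k * t < b := by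
  have h2 : (0 : ℝ) < 2 ^ k := by positivity
  rw [mem_Ico, zpow_neg, inv_mul_le_iff₀ h2, lt_inv_mul_iff₀ h2]

lemma mem_toSet_iff {I : DyadicCube n} {x : ESp n} : x ∈ I.toSet ↔ of I.gen x = I := by
  simp only [toSet, mem_ofPred_eq, mem_Ico_zpow_neg_mul_iff, of, DyadicCube.ext_iff, true_and,
    funext_iff, Int.floor_eq_iff]

lemma mem_triple_iff {I : DyadicCube n} {x : ESp n} :
    x ∈ I.triple ↔ ∀ i, |(of I.gen x).pos i - I.pos i| ≤ 1 := by
  simp only [triple, mem_ofPred_eq, mem_Ico_zpow_neg_mul_iff, of]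
  refine forall_congr' fun i => ?_
  have hlow : (I.pos i : ℝ) - 1 ≤ 2 ^ I.gen * x i ↔ I.pos i - 1 ≤ ⌊(2 : ℝ) ^ I.gen * x i⌋ := by
    rw [Int.le_floor]; push_cast; rfl
  have hhigh : 2 ^ I.gen * x i < (I.pos i : ℝ) + 2 ↔ ⌊(2 : ℝ) ^ I.gen * x i⌋ < I.pos i + 2 := by
    rw [Int.floor_lt]; push_cast; rfl
  rw [hlow, hhigh, abs_le]
  omega

lemma mem_toSet_of (k : ℤ) (x : ESp n) : x ∈ (of k x).toSet := mem_toSet_iff.2 rfl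

lemma toSet_subset_triple (I : DyadicCube n) : I.toSet ⊆ I.triple := fun x hx =>
  mem_triple_iff.2 fun i => by simp [mem_toSet_iff.1 hx]

lemma pos_of_sub (j : ℕ) (k : ℤ) (x : ESp n) (i : Fin n) :
    (of (k - j) x).pos i = (of k x).pos i / (2 ^ j : ℕ) := by
  simp only [of]
  rw [← Int.floor_div_natCast, zpow_sub₀ (by norm_num)]
  congr 1
  push_cast
  rw [zpow_natCast]
  ring

lemma of_eq_of_le {k l : ℤ} (hlk : l ≤ k) {x y : ESp n} (hxy : of k x = of k y) :
    of l x = of l y := by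
  obtain ⟨j, rfl⟩ := Int.le.dest hlk
  ext i
  · rfl
  · rw [show l = l + j - j by ring, pos_of_sub, pos_of_sub, hxy]

lemma toSet_subset_toSet {I J : DyadicCube n} (hgen : I.gen ≤ J.gen) {x : ESp n}
    (hxI : x ∈ I.toSet) (hxJ : x ∈ J.toSet) : J.toSet ⊆ I.toSet := fun y hy => by
  rw [mem_toSet_iff] at *
  rw [of_eq_of_le hgen (hy.trans hxJ.symm), hxI]

lemma toSet_of_subset_toSet_of {k l : ℤ} (hlk : l ≤ k) (x : ESp n) :
    (of k x).toSet ⊆ (of l x).toSet :=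
  toSet_subset_toSet hlk (mem_toSet_of l x) (mem_toSet_of k x)

lemma toSet_subset_triple_of_mem {I J : DyadicCube n} (hgen : I.gen ≤ J.gen) {x : ESp n}
    (hxI : x ∈ I.triple) (hxJ : x ∈ J.toSet) : J.toSet ⊆ I.triple := fun y hy => by
  rw [mem_toSet_iff] at hxJ hy
  rw [mem_triple_iff] at *
  rwa [of_eq_of_le hgen (hy.trans hxJ.symm)]

lemma triple_of_subset_triple_of {k l : ℤ} (hlk : l ≤ k) (x : ESp n) :
    (of k x).triple ⊆ (of l x).triple := fun y hy => by
  obtain ⟨j, rfl⟩ := Int.le.dest hlk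
  refine mem_triple_iff.2 fun i => ?_
  have hnear : |(of (l + j) y).pos i - (of (l + j) x).pos i| ≤ 1 := mem_triple_iff.1 hy i
  change |(of l y).pos i - (of l x).pos i| ≤ 1
  rw [show l = l + j - j by ring, pos_of_sub, pos_of_sub]
  generalize (of (l + j) y).pos i = a at *
  generalize (of (l + j) x).pos i = b at *
  have hN : 1 ≤ ((2 ^ j : ℕ) : ℤ) := by exact_mod_cast Nat.one_le_two_pow
  generalize ((2 ^ j : ℕ) : ℤ) = N at *
  rw [abs_le] at *
  have hab : a / N ≤ (b + 1 * N) / N := Int.ediv_le_ediv (by omega) (by omega)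
  have hba : b / N ≤ (a + 1 * N) / N := Int.ediv_le_ediv (by omega) (by omega)
  rw [Int.add_mul_ediv_right _ _ (by omega)] at hab hba
  omega

lemma toSet_of_sub_one_subset_triple (k : ℤ) (x : ESp n) :
    (of (k - 1) x).toSet ⊆ (of k x).triple := fun y hy => by
  refine mem_triple_iff.2 fun i => ?_
  have hparent : (of (k - (1 : ℕ)) y).pos i = (of (k - (1 : ℕ)) x).pos i := by
    rw [mem_toSet_iff] at hy
    exact congrArg (fun I => I.pos i) hy
  rw [pos_of_sub, pos_of_sub] at hparent
  change |(of k y).pos i - (of k x).pos i| ≤ 1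
  rw [abs_le]
  omega

lemma measurableSet_toSet (I : DyadicCube n) : MeasurableSet I.toSet :=
  measurableSet_setOf_forall_mem fun _ => measurableSet_Ico

lemma measurableSet_triple (I : DyadicCube n) : MeasurableSet I.triple :=
  measurableSet_setOf_forall_mem fun _ => measurableSet_Ico

lemma volume_toSet (I : DyadicCube n) :
    volume I.toSet = ENNReal.ofReal ((2 : ℝ) ^ (-I.gen)) ^ n := by
  rw [toSet, volume_setOf_forall_mem]
  simp [mul_add]

lemma volume_toSet_ne_zero (I : DyadicCube n) : volume I.toSet ≠ 0 := by
  rw [volume_toSet]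
  exact pow_ne_zero _ (by simpa using (by positivity : (0 : ℝ) < 2 ^ (-I.gen)))

lemma volume_toSet_ne_top (I : DyadicCube n) : volume I.toSet ≠ ⊤ := by
  rw [volume_toSet]
  finiteness

lemma volume_toSet_of_sub_one (k : ℤ) (x : ESp n) :
    volume (of (k - 1) x).toSet = 2 ^ n * volume (of k x).toSet := by
  simp only [volume_toSet, of]
  rw [← mul_pow, show -(k - 1) = 1 + -k by ring, zpow_add₀ (by norm_num),
    ENNReal.ofReal_mul (by norm_num)]
  norm_num

lemma exists_of_eq (I : DyadicCube n) : ∃ x, of I.gen x = I := by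
  obtain ⟨x, hx⟩ := nonempty_of_measure_ne_zero I.volume_toSet_ne_zero
  exact ⟨x, mem_toSet_iff.1 hx⟩

lemma exists_isCube_triple_subset (I : DyadicCube n) :
    ∃ Q, IsCube Q ∧ I.triple ⊆ Q ∧ volume Q = 3 ^ n * volume I.toSet := by
  refine ⟨_, ⟨fun i => (2 : ℝ) ^ (-I.gen) * (I.pos i - 1), 3 * 2 ^ (-I.gen), by positivity, rfl⟩,
    fun x hx i => ⟨(hx i).1, ?_⟩, ?_⟩
  · linarith [(hx i).2]
  · rw [volume_setOf_forall_mem_Icc, volume_toSet, ← mul_pow, ENNReal.ofReal_mul (by norm_num)]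
    norm_num

lemma _root_.IsCube.exists_subset_triple {Q : Set (ESp n)} (hQ : IsCube Q) {x : ESp n}
    (hx : x ∈ Q) :
    ∃ k, Q ⊆ (of k x).triple ∧ volume (of k x).toSet ≤ 2 ^ n * volume Q := by
  obtain ⟨c, h, hh, rfl⟩ := hQ
  obtain ⟨j, hjh, hhj⟩ := exists_mem_Ioc_zpow hh one_lt_two
  refine ⟨-(j + 1), fun y hy => mem_triple_iff.2 fun i => ?_, ?_⟩
  · have hscale : (2 : ℝ) ^ (-(j + 1)) * h ≤ 1 := by
      rw [zpow_neg, inv_mul_le_iff₀ (by positivity)]; linarith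
    have hpos : (0 : ℝ) < 2 ^ (-(j + 1)) := by positivity
    have hxy : (2 : ℝ) ^ (-(j + 1)) * x i ≤ 2 ^ (-(j + 1)) * y i + 1 := by
      nlinarith [(hx i).2, (hy i).1]
    have hyx : (2 : ℝ) ^ (-(j + 1)) * y i ≤ 2 ^ (-(j + 1)) * x i + 1 := by
      nlinarith [(hx i).1, (hy i).2]
    have hfloor_xy := Int.floor_mono hxy
    have hfloor_yx := Int.floor_mono hyx
    rw [Int.floor_add_one] at hfloor_xy hfloor_yx
    simp only [of]
    rw [abs_le]
    omega
  · rw [volume_setOf_forall_mem_Icc, volume_toSet, ← mul_pow]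
    refine pow_le_pow_left₀ zero_le ?_ n
    rw [show (2 : ℝ≥0∞) = ENNReal.ofReal 2 by norm_num, ← ENNReal.ofReal_mul (by norm_num)]
    refine ENNReal.ofReal_le_ofReal ?_
    rw [of, neg_neg, zpow_add₀ (by norm_num), zpow_one]
    linarith

lemma exists_toSet_of_subset {G : Set (ESp n)} (hG : IsOpen G) {x : ESp n} (hx : x ∈ G) (k₀ : ℤ) :
    ∃ k, k₀ ≤ k ∧ (of k x).toSet ⊆ G := by
  have hG' : IsOpen (WithLp.toLp 2 ⁻¹' G : Set (Fin n → ℝ)) :=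
    hG.preimage (PiLp.continuous_toLp 2 _)
  obtain ⟨ε, hε, hball⟩ := Metric.isOpen_iff.1 hG' (WithLp.ofLp x) hx
  obtain ⟨N, hN⟩ := exists_pow_lt_of_lt_one hε (by norm_num : (1 / 2 : ℝ) < 1)
  refine ⟨max k₀ N, le_max_left _ _, fun y hy => ?_⟩
  have hside : (2 : ℝ) ^ (-(of (max k₀ N) x).gen) < ε := by
    calc (2 : ℝ) ^ (-(of (max k₀ N) x).gen) ≤ 2 ^ (-(N : ℤ)) :=
          zpow_le_zpow_right₀ (by norm_num) (by simp [of])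
      _ = (1 / 2 : ℝ) ^ N := by rw [zpow_neg, zpow_natCast]; simp
      _ < ε := hN
  refine hball (?_ : WithLp.ofLp y ∈ _)
  rw [Metric.mem_ball, dist_pi_lt_iff hε]
  intro i
  have hxi := mem_toSet_of (max k₀ N) x i
  have hyi := hy i
  rw [mul_add, mul_one] at hxi hyi
  rw [Real.dist_eq, abs_lt]
  exact ⟨by linarith [hxi.2, hyi.1], by linarith [hxi.1, hyi.2]⟩

end DyadicCube

section MaximalCubes

variable {n : ℕ} {𝓢 : Set (DyadicCube n)}

/-- No point lies in arbitrarily large cubes of `𝓢`, so that every cube of `𝓢` is contained in a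
maximal one. -/
def HasBoundedSizes (𝓢 : Set (DyadicCube n)) : Prop :=
  ∀ x, BddBelow {k | DyadicCube.of k x ∈ 𝓢}

/-- The cubes of `𝓢` which are not properly contained in another cube of `𝓢`. -/
def maximalCubes (𝓢 : Set (DyadicCube n)) : Set (DyadicCube n) :=
  {I ∈ 𝓢 | ∀ l < I.gen, ∀ x ∈ I.toSet, DyadicCube.of l x ∉ 𝓢}

lemma HasBoundedSizes.exists_mem_maximalCubes (h𝓢 : HasBoundedSizes 𝓢) {I : DyadicCube n}
    (hI : I ∈ 𝓢) : ∃ J ∈ maximalCubes 𝓢, I.toSet ⊆ J.toSet ∧ I.triple ⊆ J.triple := by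
  obtain ⟨x, hx⟩ := I.exists_of_eq
  obtain ⟨b, hb⟩ := h𝓢 x
  obtain ⟨l, hl, hlmin⟩ := Int.exists_least_of_bdd (P := fun k => DyadicCube.of k x ∈ 𝓢)
    ⟨b, fun k hk => hb hk⟩ ⟨I.gen, by rwa [hx]⟩
  have hlI : l ≤ I.gen := hlmin _ (by rwa [hx])
  refine ⟨.of l x, ⟨hl, fun j hj y hy hy𝓢 => ?_⟩, ?_, ?_⟩
  · rw [DyadicCube.of_eq_of_le hj.le (DyadicCube.mem_toSet_iff.1 hy)] at hy𝓢
    exact hj.not_ge (hlmin j hy𝓢)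
  · exact hx ▸ DyadicCube.toSet_of_subset_toSet_of hlI x
  · exact hx ▸ DyadicCube.triple_of_subset_triple_of hlI x

lemma HasBoundedSizes.biUnion_maximalCubes (h𝓢 : HasBoundedSizes 𝓢) :
    ⋃ I ∈ maximalCubes 𝓢, I.toSet = ⋃ I ∈ 𝓢, I.toSet :=
  (biUnion_subset_biUnion_left fun _ hI => hI.1).antisymm <| iUnion₂_subset fun _ hI =>
    let ⟨_, hJ, hIJ, _⟩ := h𝓢.exists_mem_maximalCubes hI
    hIJ.trans (subset_biUnion_of_mem (u := DyadicCube.toSet) hJ)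

lemma gen_le_of_mem_maximalCubes {I J : DyadicCube n} (hI : I ∈ maximalCubes 𝓢) (hJ : J ∈ 𝓢)
    {x : ESp n} (hxI : x ∈ I.toSet) (hxJ : x ∈ J.toSet) : I.gen ≤ J.gen := by
  by_contra! hlt
  exact hI.2 _ hlt x hxI (by rwa [DyadicCube.mem_toSet_iff.1 hxJ])

lemma pairwiseDisjoint_maximalCubes (𝓢 : Set (DyadicCube n)) :
    (maximalCubes 𝓢).PairwiseDisjoint DyadicCube.toSet := fun I hI J hJ hne => by
  refine disjoint_left.2 fun x hxI hxJ => hne ?_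
  have hgen : I.gen = J.gen := le_antisymm (gen_le_of_mem_maximalCubes hI hJ.1 hxI hxJ)
    (gen_le_of_mem_maximalCubes hJ hI.1 hxJ hxI)
  rw [← DyadicCube.mem_toSet_iff.1 hxI, hgen, DyadicCube.mem_toSet_iff.1 hxJ]

lemma measure_biUnion_toSet_le {μ ν : Measure (ESp n)} (hdisj : 𝓢.PairwiseDisjoint DyadicCube.toSet)
    (h : ∀ I ∈ 𝓢, μ I.toSet ≤ ν I.toSet) : μ (⋃ I ∈ 𝓢, I.toSet) ≤ ν (⋃ I ∈ 𝓢, I.toSet) := by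
  rw [measure_biUnion 𝓢.to_countable hdisj fun I _ => I.measurableSet_toSet,
    measure_biUnion 𝓢.to_countable hdisj fun I _ => I.measurableSet_toSet]
  exact ENNReal.tsum_le_tsum fun I => h I I.2

lemma HasBoundedSizes.measure_biUnion_le (h𝓢 : HasBoundedSizes 𝓢) {μ ν : Measure (ESp n)}
    (h : ∀ I ∈ 𝓢, μ I.toSet ≤ ν I.toSet) : μ (⋃ I ∈ 𝓢, I.toSet) ≤ ν (⋃ I ∈ 𝓢, I.toSet) := by
  rw [← h𝓢.biUnion_maximalCubes]
  exact measure_biUnion_toSet_le (pairwiseDisjoint_maximalCubes 𝓢) fun I hI => h I hI.1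

/-- The cube `I` and its neighbours of the same generation, whose union is `I.triple`. -/
def DyadicCube.neighbours (I : DyadicCube n) : Set (DyadicCube n) :=
  {J | J.gen = I.gen ∧ ∀ i, |J.pos i - I.pos i| ≤ 1}

lemma DyadicCube.biUnion_neighbours (I : DyadicCube n) :
    ⋃ J ∈ I.neighbours, J.toSet = I.triple := by
  ext x
  simp only [mem_iUnion, exists_prop, mem_triple_iff]
  constructor
  · rintro ⟨J, ⟨hgen, hpos⟩, hx⟩
    rwa [← hgen, mem_toSet_iff.1 hx]
  · exact fun hx => ⟨.of I.gen x, ⟨rfl, hx⟩, mem_toSet_of _ _⟩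

lemma DyadicCube.measure_triple_le {μ ν : Measure (ESp n)} {I : DyadicCube n}
    (h : ∀ J ∈ I.neighbours, μ J.toSet ≤ ν J.toSet) : μ I.triple ≤ ν I.triple := by
  rw [← I.biUnion_neighbours]
  refine measure_biUnion_toSet_le (fun J hJ L hL hne => ?_) h
  refine disjoint_left.2 fun x hxJ hxL => hne ?_
  rw [← mem_toSet_iff.1 hxJ, hJ.1, ← hL.1, mem_toSet_iff.1 hxL]

end MaximalCubes

/-- The restricted `A_p` condition `(|F| / |Q|)ᵖ ≤ C μ(F) / μ(Q)` for a natural exponent `p`, tested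
on tripled dyadic cubes `Q`; every cube is comparable to one of these. -/
structure RestrictedAp {n : ℕ} (μ : Measure (ESp n)) (p : ℕ) (C : ℝ≥0∞) : Prop where
  le : ∀ I : DyadicCube n, ∀ F ⊆ I.triple, MeasurableSet F →
    volume F ^ p * μ I.triple ≤ C * volume I.toSet ^ p * μ F
  measure_triple_ne_top : ∀ I : DyadicCube n, μ I.triple ≠ ⊤
  volume_absolutelyContinuous : volume ≪ μ
  const_ne_top : C ≠ ⊤

namespace RestrictedAp

variable {n p : ℕ} {μ : Measure (ESp n)} {C : ℝ≥0∞}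

lemma of_isCube [SigmaFinite μ] (hμ : volume ≪ μ) (hC : C ≠ ⊤)
    (h : ∀ Q, IsCube Q → ∀ F ⊆ Q, MeasurableSet F →
      volume F ^ p * μ Q ≤ C * volume Q ^ p * μ F) :
    RestrictedAp μ p (C * 3 ^ (n * p)) := by
  have hle : ∀ I : DyadicCube n, ∀ F ⊆ I.triple, MeasurableSet F →
      volume F ^ p * μ I.triple ≤ C * 3 ^ (n * p) * volume I.toSet ^ p * μ F := by
    intro I F hF hFm
    obtain ⟨Q, hQ, hIQ, hvol⟩ := I.exists_isCube_triple_subset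
    calc volume F ^ p * μ I.triple ≤ volume F ^ p * μ Q := by gcongr
      _ ≤ C * volume Q ^ p * μ F := h Q hQ F (hF.trans hIQ) hFm
      _ = C * 3 ^ (n * p) * volume I.toSet ^ p * μ F := by rw [hvol, mul_pow, pow_mul]; ring
  refine ⟨hle, fun I htop => ?_, hμ, by finiteness⟩
  obtain ⟨k, hk⟩ : ∃ k, volume (I.triple ∩ spanningSets μ k) ≠ 0 := by
    by_contra! hnull
    have htriple : volume I.triple = 0 := by
      rw [← inter_univ I.triple, ← iUnion_spanningSets μ, inter_iUnion]
      exact measure_iUnion_null hnull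
    exact I.volume_toSet_ne_zero (measure_mono_null I.toSet_subset_triple htriple)
  have hfin : μ (I.triple ∩ spanningSets μ k) ≠ ⊤ :=
    measure_ne_top_of_subset inter_subset_right (measure_spanningSets_lt_top μ k).ne
  have hvol := I.volume_toSet_ne_top
  have hcontra := hle I _ inter_subset_left
    (I.measurableSet_triple.inter (measurableSet_spanningSets μ k))
  rw [htop, ENNReal.mul_top (pow_ne_zero _ hk), top_le_iff] at hcontra
  exact absurd hcontra (by finiteness)

variable (h : RestrictedAp μ p C) (I : DyadicCube n)
include h

lemma measure_toSet_ne_top : μ I.toSet ≠ ⊤ :=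
  measure_ne_top_of_subset I.toSet_subset_triple (h.measure_triple_ne_top I)

lemma measure_toSet_ne_zero : μ I.toSet ≠ 0 := fun h0 =>
  I.volume_toSet_ne_zero (h.volume_absolutelyContinuous h0)

lemma measure_triple_ne_zero : μ I.triple ≠ 0 := fun h0 =>
  h.measure_toSet_ne_zero I (measure_mono_null I.toSet_subset_triple h0)

variable {I}

lemma measure_triple_le_of_volume_le {F : Set (ESp n)} (hF : F ⊆ I.triple) (hFm : MeasurableSet F)
    {t : ℝ≥0∞} (hvol : volume I.toSet ≤ t * volume F) : μ I.triple ≤ C * t ^ p * μ F := by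
  have hvol0 := I.volume_toSet_ne_zero
  have hvolt := I.volume_toSet_ne_top
  refine (ENNReal.mul_le_mul_iff_right (pow_ne_zero p hvol0) (by finiteness)).1 ?_
  calc volume I.toSet ^ p * μ I.triple ≤ (t * volume F) ^ p * μ I.triple := by gcongr
    _ = t ^ p * (volume F ^ p * μ I.triple) := by ring
    _ ≤ t ^ p * (C * volume I.toSet ^ p * μ F) := by gcongr t ^ p * ?_; exact h.le I F hF hFm
    _ = volume I.toSet ^ p * (C * t ^ p * μ F) := by ring

variable (I) in
lemma measure_triple_le : μ I.triple ≤ C * μ I.toSet := by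
  simpa using h.measure_triple_le_of_volume_le I.toSet_subset_triple I.measurableSet_toSet
    (t := 1) (by simp)

lemma mul_volume_lt_of_measure_le {F : Set (ESp n)} (hF : F ⊆ I.triple) (hFm : MeasurableSet F)
    {ε t : ℝ≥0∞} (hμF : μ F ≤ ε * μ I.triple) (ht : C * t ^ p * ε < 1) :
    t * volume F < volume I.toSet := by
  by_contra! hvol
  refine lt_irrefl (μ I.triple) ?_
  calc μ I.triple ≤ C * t ^ p * μ F := h.measure_triple_le_of_volume_le hF hFm hvol
    _ ≤ C * t ^ p * ε * μ I.triple := by rw [mul_assoc _ ε]; gcongr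
    _ < 1 * μ I.triple := by
      gcongr
      exacts [h.measure_triple_ne_zero I, h.measure_triple_ne_top I]
    _ = μ I.triple := one_mul _

lemma measure_le_mul_measure_diff {F : Set (ESp n)} (hF : F ⊆ I.toSet) (hFm : MeasurableSet F)
    (hvol : 2 * volume F ≤ volume I.toSet) : μ I.toSet ≤ C * 2 ^ p * μ (I.toSet \ F) := by
  have hvolF : volume F ≠ ⊤ := measure_ne_top_of_subset hF I.volume_toSet_ne_top
  have hsplit := measure_sdiff_add_inter (μ := volume) I.toSet hFm
  rw [inter_eq_self_of_subset_right hF] at hsplit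
  have hF_le : volume F ≤ volume (I.toSet \ F) := by
    rw [← hsplit, two_mul] at hvol
    exact (ENNReal.add_le_add_iff_right hvolF).1 hvol
  refine (measure_mono I.toSet_subset_triple).trans (h.measure_triple_le_of_volume_le
    (sdiff_subset.trans I.toSet_subset_triple) (I.measurableSet_toSet.diff hFm) ?_)
  rw [← hsplit, two_mul]
  gcongr

end RestrictedAp

/-- A dyadic form of the `A_∞` condition: filling a dyadic cube from at most half of its volume
multiplies the `μ`-measure by at least `g`. -/
def HalvingGain {n : ℕ} (μ : Measure (ESp n)) (g : ℝ≥0∞) : Prop :=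
  ∀ I : DyadicCube n, ∀ F ⊆ I.toSet, MeasurableSet F → 2 * volume F ≤ volume I.toSet →
    g * μ F ≤ μ I.toSet

lemma RestrictedAp.halvingGain {n p : ℕ} {μ : Measure (ESp n)} {C : ℝ≥0∞}
    (h : RestrictedAp μ p C) : HalvingGain μ (1 + (C * 2 ^ p)⁻¹) := fun I F hF hFm hvol => by
  have hgain : (C * 2 ^ p)⁻¹ * μ F ≤ μ (I.toSet \ F) := by
    rw [mul_comm, ← div_eq_mul_inv]
    refine ENNReal.div_le_of_le_mul ?_
    rw [mul_comm]
    exact (measure_mono hF).trans (h.measure_le_mul_measure_diff hF hFm hvol)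
  calc (1 + (C * 2 ^ p)⁻¹) * μ F = (C * 2 ^ p)⁻¹ * μ F + μ F := by ring
    _ ≤ μ (I.toSet \ F) + μ F := by gcongr
    _ = μ I.toSet := by
      rw [← measure_sdiff_add_inter I.toSet hFm, inter_eq_self_of_subset_right hF]

lemma RestrictedAp.one_lt_gain {n p : ℕ} {μ : Measure (ESp n)} {C : ℝ≥0∞}
    (h : RestrictedAp μ p C) : 1 < 1 + (C * 2 ^ p)⁻¹ :=
  ENNReal.lt_add_right one_ne_top <|
    ENNReal.inv_ne_zero.2 (ENNReal.mul_ne_top h.const_ne_top (by finiteness))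

namespace HalvingGain

variable {n : ℕ} {μ : Measure (ESp n)} {g : ℝ≥0∞} (h : HalvingGain μ g)
include h

lemma pow_mul_measure_of_le (hn : 0 < n) (x : ESp n) (k : ℤ) (j : ℕ) :
    g ^ j * μ (DyadicCube.of k x).toSet ≤ μ (DyadicCube.of (k - j) x).toSet := by
  induction j with
  | zero => simp
  | succ j ih =>
    have hhalf : 2 * volume (DyadicCube.of (k - j) x).toSet ≤
        volume (DyadicCube.of (k - j - 1) x).toSet := by
      rw [DyadicCube.volume_toSet_of_sub_one]
      gcongr
      exact le_self_pow₀ one_le_two hn.ne'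
    calc g ^ (j + 1) * μ (DyadicCube.of k x).toSet
        = g * (g ^ j * μ (DyadicCube.of k x).toSet) := by ring
      _ ≤ g * μ (DyadicCube.of (k - j) x).toSet := by gcongr
      _ ≤ μ (DyadicCube.of (k - j - 1) x).toSet :=
          h _ _ (DyadicCube.toSet_of_subset_toSet_of (by omega) x)
            (DyadicCube.measurableSet_toSet _) hhalf
      _ = μ (DyadicCube.of (k - (j + 1 : ℕ)) x).toSet := by
          rw [show k - (j + 1 : ℕ) = k - j - 1 by push_cast; ring]

lemma bddBelow_measure_le (hn : 0 < n) (hg : 1 < g) (hμ : volume ≪ μ) (x : ESp n) {B : ℝ≥0∞}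
    (hB : B ≠ ⊤) : BddBelow {k | μ (DyadicCube.of k x).toSet ≤ B} := by
  have hunit : μ (DyadicCube.of 0 x).toSet ≠ 0 := fun h0 =>
    DyadicCube.volume_toSet_ne_zero _ (hμ h0)
  obtain ⟨j, hj⟩ : ∃ j : ℕ, B < g ^ j * μ (DyadicCube.of 0 x).toSet := by
    have hlim := ENNReal.Tendsto.mul_const (ENNReal.tendsto_pow_atTop_nhds_top_iff.2 hg)
      (b := μ (DyadicCube.of 0 x).toSet) (Or.inl top_ne_zero)
    rw [ENNReal.top_mul hunit] at hlim
    exact (hlim.eventually (lt_mem_nhds hB.lt_top)).exists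
  refine ⟨-j, fun k hk => ?_⟩
  by_contra! hlt
  refine hj.not_ge ?_
  calc g ^ j * μ (DyadicCube.of 0 x).toSet ≤ μ (DyadicCube.of (0 - j) x).toSet :=
        h.pow_mul_measure_of_le hn x 0 j
    _ ≤ μ (DyadicCube.of k x).toSet :=
        measure_mono (DyadicCube.toSet_of_subset_toSet_of (by omega) x)
    _ ≤ B := hk

end HalvingGain

section DenseCubes

variable {n : ℕ}

/-- The dyadic cubes of generation at least `k` in which `F` has density more than `2⁻⁽ⁿ⁺¹⁾`. -/
def denseCubes (F : Set (ESp n)) (k : ℤ) : Set (DyadicCube n) :=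
  {J | k ≤ J.gen ∧ volume J.toSet < 2 ^ (n + 1) * volume (F ∩ J.toSet)}

variable {F : Set (ESp n)}

lemma hasBoundedSizes_denseCubes (k : ℤ) : HasBoundedSizes (denseCubes F k) :=
  fun _ => ⟨k, fun _ hl => hl.1⟩

lemma mem_denseCubes_of_subset {J : DyadicCube n} (hJF : J.toSet ⊆ F) {k : ℤ} (hk : k ≤ J.gen) :
    J ∈ denseCubes F k := by
  refine ⟨hk, ?_⟩
  rw [inter_eq_self_of_subset_right hJF]
  calc volume J.toSet = 1 * volume J.toSet := (one_mul _).symm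
    _ < 2 ^ (n + 1) * volume J.toSet := ENNReal.mul_lt_mul_left J.volume_toSet_ne_zero
        J.volume_toSet_ne_top (one_lt_pow₀ one_lt_two n.succ_ne_zero)

lemma volume_biUnion_denseCubes_le (k : ℤ) :
    volume (⋃ J ∈ denseCubes F k, J.toSet) ≤ 2 ^ (n + 1) * volume F := by
  calc volume (⋃ J ∈ denseCubes F k, J.toSet)
      ≤ ((2 ^ (n + 1) : ℝ≥0∞) • volume.restrict F) (⋃ J ∈ denseCubes F k, J.toSet) := by
        refine (hasBoundedSizes_denseCubes k).measure_biUnion_le fun J hJ => ?_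
        rw [Measure.smul_apply, Measure.restrict_apply J.measurableSet_toSet, inter_comm]
        exact hJ.2.le
    _ ≤ 2 ^ (n + 1) * volume F := by
        refine (measure_mono (subset_univ _)).trans ?_
        simp

lemma two_mul_volume_inter_le_of_mem_maximalCubes {I J : DyadicCube n}
    (hF : 2 ^ (n + 1) * volume F ≤ volume I.toSet)
    (hJ : J ∈ maximalCubes (denseCubes F I.gen)) :
    2 * volume (F ∩ J.toSet) ≤ volume J.toSet := by
  obtain ⟨x, hx⟩ := J.exists_of_eq
  have hgen : I.gen ≠ J.gen := fun hgen => hJ.1.2.not_ge <| by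
    calc 2 ^ (n + 1) * volume (F ∩ J.toSet) ≤ 2 ^ (n + 1) * volume F := by
          gcongr; exact inter_subset_left
      _ ≤ volume J.toSet := by rwa [J.volume_toSet, ← hgen, ← I.volume_toSet]
  have hgen_le : I.gen ≤ (DyadicCube.of (J.gen - 1) x).gen :=
    Int.le_sub_one_of_lt (lt_of_le_of_ne hJ.1.1 hgen)
  have hparent : 2 ^ (n + 1) * volume (F ∩ (DyadicCube.of (J.gen - 1) x).toSet) ≤
      2 ^ n * volume J.toSet := by
    have hnot := hJ.2 (J.gen - 1) (by omega) x (DyadicCube.mem_toSet_iff.2 hx)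
    rw [denseCubes, mem_ofPred_eq, not_and, not_lt] at hnot
    simpa only [DyadicCube.volume_toSet_of_sub_one, hx] using hnot hgen_le
  rw [pow_succ, mul_assoc] at hparent
  refine le_trans ?_ ((ENNReal.mul_le_mul_iff_right (by simp) (by finiteness)).1 hparent)
  gcongr
  conv_lhs => rw [← hx]
  exact DyadicCube.toSet_of_subset_toSet_of (by omega) x

variable {μ : Measure (ESp n)} {g : ℝ≥0∞} (h : HalvingGain μ g) {I : DyadicCube n}
include h

lemma HalvingGain.mul_measure_le_measure_biUnion_denseCubes (hFm : MeasurableSet F)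
    (hF : 2 ^ (n + 1) * volume F ≤ volume I.toSet)
    (hcover : F ⊆ ⋃ J ∈ denseCubes F I.gen, J.toSet) :
    g * μ F ≤ μ (⋃ J ∈ denseCubes F I.gen, J.toSet) := by
  rw [← (hasBoundedSizes_denseCubes I.gen).biUnion_maximalCubes] at hcover ⊢
  calc g * μ F = (g • μ.restrict F) (⋃ J ∈ maximalCubes (denseCubes F I.gen), J.toSet) := by
        rw [Measure.smul_apply, Measure.restrict_apply' hFm, inter_eq_self_of_subset_right hcover,
          smul_eq_mul]
    _ ≤ μ (⋃ J ∈ maximalCubes (denseCubes F I.gen), J.toSet) := by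
        refine measure_biUnion_toSet_le (pairwiseDisjoint_maximalCubes _) fun J hJ => ?_
        rw [Measure.smul_apply, Measure.restrict_apply' hFm, smul_eq_mul, inter_comm]
        exact h J _ inter_subset_right (hFm.inter J.measurableSet_toSet)
          (two_mul_volume_inter_le_of_mem_maximalCubes hF hJ)

lemma HalvingGain.pow_mul_measure_biUnion_le (N : ℕ) (𝓕 : Set (DyadicCube n))
    (hgen : ∀ J ∈ 𝓕, I.gen ≤ J.gen) (hsub : ∀ J ∈ 𝓕, J.toSet ⊆ I.triple)
    (hvol : (2 ^ (n + 1)) ^ N * volume (⋃ J ∈ 𝓕, J.toSet) ≤ volume I.toSet) :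
    g ^ N * μ (⋃ J ∈ 𝓕, J.toSet) ≤ μ I.triple := by
  induction N generalizing 𝓕 with
  | zero => simpa using measure_mono (iUnion₂_subset hsub)
  | succ N ih =>
    set F := ⋃ J ∈ 𝓕, J.toSet
    have hcover : F ⊆ ⋃ J ∈ denseCubes F I.gen, J.toSet :=
      biUnion_subset_biUnion_left fun J hJ =>
        mem_denseCubes_of_subset (subset_biUnion_of_mem (u := DyadicCube.toSet) hJ) (hgen J hJ)
    have hdense_sub : ∀ J ∈ denseCubes F I.gen, J.toSet ⊆ I.triple := fun J hJ => by
      obtain ⟨x, hxF, hxJ⟩ := nonempty_of_measure_ne_zero (pos_of_mul_pos_right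
        ((zero_le).trans_lt hJ.2) zero_le).ne'
      exact DyadicCube.toSet_subset_triple_of_mem hJ.1 (iUnion₂_subset hsub hxF) hxJ
    have hF : 2 ^ (n + 1) * volume F ≤ volume I.toSet := by
      refine le_trans ?_ hvol
      gcongr ?_ * volume F
      exact le_self_pow₀ (one_le_pow₀ one_le_two) N.succ_ne_zero
    have hdense_vol : (2 ^ (n + 1)) ^ N * volume (⋃ J ∈ denseCubes F I.gen, J.toSet) ≤
        volume I.toSet := by
      refine le_trans ?_ hvol
      rw [pow_succ (2 ^ (n + 1)) N, mul_assoc]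
      gcongr
      exact volume_biUnion_denseCubes_le _
    calc g ^ (N + 1) * μ F = g ^ N * (g * μ F) := by ring
      _ ≤ g ^ N * μ (⋃ J ∈ denseCubes F I.gen, J.toSet) := by
          gcongr
          exact h.mul_measure_le_measure_biUnion_denseCubes
            (MeasurableSet.biUnion 𝓕.to_countable fun J _ => J.measurableSet_toSet) hF hcover
      _ ≤ μ I.triple := ih _ (fun J hJ => hJ.1) hdense_sub hdense_vol

lemma HalvingGain.pow_mul_measure_le (hF : F ⊆ I.triple) (N : ℕ)
    (hvol : (2 ^ (n + 1)) ^ N * volume F < volume I.toSet) : g ^ N * μ F ≤ μ I.triple := by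
  obtain ⟨G, hFG, hG, hGvol⟩ := F.exists_isOpen_lt_of_lt (μ := volume)
    (volume I.toSet / (2 ^ (n + 1)) ^ N) (by
      rwa [ENNReal.lt_div_iff_mul_lt (by simp) (by simp), mul_comm])
  rw [ENNReal.lt_div_iff_mul_lt (by simp) (by simp), mul_comm] at hGvol
  set 𝓕 : Set (DyadicCube n) := {J | I.gen ≤ J.gen ∧ J.toSet ⊆ G ∩ I.triple}
  have hcover : F ⊆ ⋃ J ∈ 𝓕, J.toSet := fun x hx => by
    obtain ⟨k, hk, hkG⟩ := DyadicCube.exists_toSet_of_subset hG (hFG hx) I.gen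
    have hk𝓕 : DyadicCube.of k x ∈ 𝓕 := ⟨hk, subset_inter hkG
      (DyadicCube.toSet_subset_triple_of_mem hk (hF hx) (DyadicCube.mem_toSet_of k x))⟩
    exact mem_biUnion hk𝓕 (DyadicCube.mem_toSet_of k x)
  have h𝓕G : ⋃ J ∈ 𝓕, J.toSet ⊆ G :=
    iUnion₂_subset fun J hJ => hJ.2.trans inter_subset_left
  calc g ^ N * μ F ≤ g ^ N * μ (⋃ J ∈ 𝓕, J.toSet) := by gcongr
    _ ≤ μ I.triple := by
      refine h.pow_mul_measure_biUnion_le N 𝓕 (fun J hJ => hJ.1)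
        (fun J hJ => hJ.2.trans inter_subset_right) (le_trans ?_ hGvol.le)
      gcongr

end DenseCubes

section HighCubes

variable {n p₁ p₂ : ℕ} {μ ν W : Measure (ESp n)} {C₁ C₂ a t t' : ℝ≥0∞}

/-- The dyadic cubes on which the average of `μ` relative to `ν` exceeds `t`. -/
def highCubes (μ ν : Measure (ESp n)) (t : ℝ≥0∞) : Set (DyadicCube n) :=
  {I | t * ν I.toSet < μ I.toSet}

/-- The superlevel set at height `t` of the dyadic maximal function of `μ` relative to `ν`. -/
def highSet (μ ν : Measure (ESp n)) (t : ℝ≥0∞) : Set (ESp n) := ⋃ I ∈ highCubes μ ν t, I.toSet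

lemma measurableSet_highSet : MeasurableSet (highSet μ ν t) :=
  .biUnion (to_countable _) fun I _ => I.measurableSet_toSet

lemma highCubes_anti (htt' : t ≤ t') : highCubes μ ν t' ⊆ highCubes μ ν t :=
  fun _ hI => (mul_le_mul' htt' le_rfl).trans_lt hI

lemma HasBoundedSizes.mul_measure_highSet_le (h : HasBoundedSizes (highCubes μ ν t)) :
    t * ν (highSet μ ν t) ≤ μ univ :=
  (h.measure_biUnion_le (μ := t • ν) fun _ hI => (le_of_lt hI : t * _ ≤ _)).trans
    (measure_mono (subset_univ _))

lemma HasBoundedSizes.mul_measure_highSet_inter_le (h : HasBoundedSizes (highCubes μ ν t'))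
    (htt' : t ≤ t') {I : DyadicCube n} (hI : I ∈ maximalCubes (highCubes μ ν t)) :
    t' * ν (highSet μ ν t' ∩ I.toSet) ≤ μ I.toSet := by
  have hIm := I.measurableSet_toSet
  calc t' * ν (highSet μ ν t' ∩ I.toSet)
      = (t' • ν.restrict I.toSet) (highSet μ ν t') := by
        rw [Measure.smul_apply, Measure.restrict_apply' hIm, smul_eq_mul]
    _ ≤ μ.restrict I.toSet (highSet μ ν t') := by
        refine h.measure_biUnion_le fun J hJ => ?_
        rw [Measure.smul_apply, Measure.restrict_apply' hIm, Measure.restrict_apply' hIm,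
          smul_eq_mul]
        rcases (J.toSet ∩ I.toSet).eq_empty_or_nonempty with hempty | ⟨x, hxJ, hxI⟩
        · simp [hempty]
        · rw [inter_eq_self_of_subset_left (DyadicCube.toSet_subset_toSet
            (gen_le_of_mem_maximalCubes hI (highCubes_anti htt' hJ) hxI hxJ) hxI hxJ)]
          exact le_of_lt hJ
    _ ≤ μ I.toSet := by
        rw [Measure.restrict_apply' hIm]
        exact measure_mono inter_subset_right

namespace RestrictedAp

variable (hν : RestrictedAp ν p₁ C₁)
include hν

lemma hasBoundedSizes_highCubes [IsFiniteMeasure μ] (hn : 0 < n) (ht : t ≠ 0) :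
    HasBoundedSizes (highCubes μ ν t) := fun x => by
  refine (hν.halvingGain.bddBelow_measure_le hn hν.one_lt_gain hν.volume_absolutelyContinuous x
    (B := μ univ / t) (by finiteness)).mono fun k hk => ?_
  rw [mem_ofPred_eq, ENNReal.le_div_iff_mul_le (.inl ht) (.inr (measure_ne_top μ _)), mul_comm]
  exact hk.le.trans (measure_mono (subset_univ _))

lemma exists_mem_highCubes {Q : Set (ESp n)} (hQ : IsCube Q) {x : ESp n} (hx : x ∈ Q) {s : ℝ≥0∞}
    (hs : s * ν Q < μ Q) (hts : C₁ * (2 ^ n) ^ p₁ * t ≤ s) :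
    ∃ I ∈ highCubes μ ν t, x ∈ I.triple := by
  obtain ⟨k, hQk, hvol⟩ := hQ.exists_subset_triple hx
  by_contra! hcon
  refine hs.not_ge ?_
  have hneighbours : ∀ J ∈ (DyadicCube.of k x).neighbours, μ J.toSet ≤ (t • ν) J.toSet := by
    rintro J ⟨hgen, hpos⟩
    refine not_lt.1 fun hJ => hcon J hJ (DyadicCube.mem_triple_iff.2 fun i => ?_)
    rw [abs_sub_comm, hgen]
    exact hpos i
  calc μ Q ≤ μ (DyadicCube.of k x).triple := measure_mono hQk
    _ ≤ t * ν (DyadicCube.of k x).triple := DyadicCube.measure_triple_le hneighbours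
    _ ≤ t * (C₁ * (2 ^ n) ^ p₁ * ν Q) := by
        gcongr
        exact hν.measure_triple_le_of_volume_le hQk hQ.measurableSet hvol
    _ = C₁ * (2 ^ n) ^ p₁ * t * ν Q := by ring
    _ ≤ s * ν Q := by gcongr

lemma measure_le_of_mem_maximalCubes {I : DyadicCube n}
    (hI : I ∈ maximalCubes (highCubes μ ν t)) : μ I.toSet ≤ C₁ * t * ν I.toSet := by
  obtain ⟨x, hx⟩ := I.exists_of_eq
  have hparent : μ (DyadicCube.of (I.gen - 1) x).toSet ≤
      t * ν (DyadicCube.of (I.gen - 1) x).toSet :=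
    not_lt.1 (hI.2 (I.gen - 1) (by omega) x (DyadicCube.mem_toSet_iff.2 hx))
  calc μ I.toSet ≤ μ (DyadicCube.of (I.gen - 1) x).toSet := by
        conv_lhs => rw [← hx]
        exact measure_mono (DyadicCube.toSet_of_subset_toSet_of (by omega) x)
    _ ≤ t * ν (DyadicCube.of (I.gen - 1) x).toSet := hparent
    _ ≤ t * ν I.triple := by
        gcongr
        conv_rhs => rw [← hx]
        exact DyadicCube.toSet_of_sub_one_subset_triple _ x
    _ ≤ t * (C₁ * ν I.toSet) := by gcongr; exact hν.measure_triple_le I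
    _ = C₁ * t * ν I.toSet := by ring

lemma two_mul_volume_highSet_inter_lt [IsFiniteMeasure μ] (hn : 0 < n) (ht : t ≠ 0) (ht' : t ≠ ⊤)
    (ha : C₁ * 2 ^ p₁ * C₁ < a) (ha1 : 1 ≤ a) (ha' : a ≠ ⊤) {I : DyadicCube n}
    (hI : I ∈ maximalCubes (highCubes μ ν t)) :
    2 * volume (highSet μ ν (a * t) ∩ I.toSet) < volume I.toSet := by
  have ha0 : a ≠ 0 := (zero_lt_one.trans_le ha1).ne'
  have hlocal : a * t * ν (highSet μ ν (a * t) ∩ I.toSet) ≤ C₁ * t * ν I.toSet :=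
    ((hν.hasBoundedSizes_highCubes hn (mul_ne_zero ha0 ht)).mul_measure_highSet_inter_le
      (le_mul_of_one_le_left zero_le ha1) hI).trans (hν.measure_le_of_mem_maximalCubes hI)
  have hε : ν (highSet μ ν (a * t) ∩ I.toSet) ≤ C₁ / a * ν I.triple := by
    rw [← ENNReal.mul_div_right_comm, ENNReal.le_div_iff_mul_le (.inl ha0) (.inl ha'),
      ← ENNReal.mul_le_mul_iff_right ht ht']
    calc t * (ν (highSet μ ν (a * t) ∩ I.toSet) * a)
        = a * t * ν (highSet μ ν (a * t) ∩ I.toSet) := by ring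
      _ ≤ C₁ * t * ν I.toSet := hlocal
      _ ≤ C₁ * t * ν I.triple := by gcongr; exact I.toSet_subset_triple
      _ = t * (C₁ * ν I.triple) := by ring
  refine hν.mul_volume_lt_of_measure_le (inter_subset_right.trans I.toSet_subset_triple)
    (measurableSet_highSet.inter I.measurableSet_toSet) hε ?_
  rw [← mul_div_assoc]
  exact ENNReal.div_lt_of_lt_mul (by rwa [one_mul])

end RestrictedAp

/-- The Calderón–Zygmund cubes of `μ` relative to `ν` at the heights `aᵏ`, labelled by `k`. -/
def principalCubes (μ ν : Measure (ESp n)) (a : ℝ≥0∞) : Set (ℤ × DyadicCube n) :=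
  {J | J.2 ∈ maximalCubes (highCubes μ ν (a ^ J.1))}

/-- The part of a principal cube which avoids the principal cubes of the next height. These parts
are pairwise disjoint, and they make the principal cubes a sparse family. -/
def freePart (μ ν : Measure (ESp n)) (a : ℝ≥0∞) (J : ℤ × DyadicCube n) : Set (ESp n) :=
  J.2.toSet \ highSet μ ν (a ^ (J.1 + 1))

lemma pairwiseDisjoint_freePart (ha : 1 ≤ a) :
    (principalCubes μ ν a).PairwiseDisjoint (freePart μ ν a) := by
  have hlevel : ∀ J ∈ principalCubes μ ν a, ∀ J' ∈ principalCubes μ ν a,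
      ∀ x ∈ freePart μ ν a J, x ∈ freePart μ ν a J' → J'.1 ≤ J.1 := by
    intro J _ J' hJ' x hx hx'
    by_contra! hlt
    exact hx.2 (mem_biUnion (highCubes_anti (ENNReal.zpow_le_of_le ha (by omega)) hJ'.1) hx'.1)
  intro J hJ J' hJ' hne
  refine disjoint_left.2 fun x hx hx' => hne ?_
  have hk : J.1 = J'.1 := le_antisymm (hlevel J' hJ' J hJ x hx' hx) (hlevel J hJ J' hJ' x hx hx')
  have hJ'' : J'.2 ∈ maximalCubes (highCubes μ ν (a ^ J.1)) := by rw [hk]; exact hJ'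
  exact Prod.ext hk ((pairwiseDisjoint_maximalCubes _).elim_set hJ hJ'' x hx.1 hx'.1)

lemma RestrictedAp.measure_le_mul_measure_freePart [IsFiniteMeasure μ]
    (hν : RestrictedAp ν p₁ C₁) (hW : RestrictedAp W p₂ C₂) (hn : 0 < n)
    (ha : C₁ * 2 ^ p₁ * C₁ < a) (ha1 : 1 ≤ a) (ha' : a ≠ ⊤) {J : ℤ × DyadicCube n}
    (hJ : J ∈ principalCubes μ ν a) : W J.2.toSet ≤ C₂ * 2 ^ p₂ * W (freePart μ ν a J) := by
  have ha0 : a ≠ 0 := (zero_lt_one.trans_le ha1).ne'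
  have hhalf := hν.two_mul_volume_highSet_inter_lt hn (ENNReal.zpow_pos ha0 ha' J.1).ne'
    (ENNReal.zpow_ne_top ha0 ha' J.1) ha ha1 ha' hJ
  have hfree := hW.measure_le_mul_measure_diff inter_subset_right
    (measurableSet_highSet.inter J.2.measurableSet_toSet) hhalf.le
  rwa [inter_comm, sdiff_self_inter, mul_comm a,
    show a ^ J.1 * a = a ^ (J.1 + 1) by rw [ENNReal.zpow_add ha0 ha', zpow_one]] at hfree

lemma mul_measure_biUnion_le_of_freePart {s c K : ℝ≥0∞} (hs : HasBoundedSizes (highCubes μ W s))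
    (ha : 1 ≤ a) {𝓒 : Set (ℤ × DyadicCube n)} (h𝓒 : 𝓒 ⊆ principalCubes μ ν a)
    (hhigh : ∀ J ∈ 𝓒, J.2 ∈ highCubes μ W s) {T : ℤ × DyadicCube n → Set (ESp n)}
    (hT : ∀ J ∈ 𝓒, c * W (T J) ≤ K * W (freePart μ ν a J)) :
    c * s * W (⋃ J ∈ 𝓒, T J) ≤ K * μ univ := by
  have hfree : ⋃ J ∈ 𝓒, freePart μ ν a J ⊆ highSet μ W s :=
    iUnion₂_subset fun J hJ =>
      sdiff_subset.trans (subset_biUnion_of_mem (u := DyadicCube.toSet) (hhigh J hJ))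
  calc c * s * W (⋃ J ∈ 𝓒, T J) = s * (c * W (⋃ J ∈ 𝓒, T J)) := by ring
    _ ≤ s * (c * ∑' J : 𝓒, W (T J)) := by
        gcongr
        exact measure_biUnion_le _ 𝓒.to_countable _
    _ ≤ s * (K * ∑' J : 𝓒, W (freePart μ ν a J)) := by
        gcongr s * ?_
        rw [← ENNReal.tsum_mul_left, ← ENNReal.tsum_mul_left]
        exact ENNReal.tsum_le_tsum fun J => hT J J.2
    _ = K * (s * W (⋃ J ∈ 𝓒, freePart μ ν a J)) := by
        rw [measure_biUnion 𝓒.to_countable ((pairwiseDisjoint_freePart ha).subset h𝓒)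
          fun J _ => J.2.measurableSet_toSet.diff measurableSet_highSet]
        ring
    _ ≤ K * (s * W (highSet μ W s)) := by gcongr
    _ ≤ K * μ univ := by gcongr; exact hs.mul_measure_highSet_le

end HighCubes

section WeightedLevelSets

variable {n p₁ p₂ : ℕ} {μ ν W : Measure (ESp n)} {V : ESp n → ℝ≥0∞}
  {C₁ C₂ a β κ η η' θ : ℝ≥0∞}

lemma withDensity_inter_setOf_le (hV : Measurable V) {D : Set (ESp n)} (hD : MeasurableSet D)
    (s : ℝ≥0∞) : ν.withDensity V (D ∩ {x | V x ≤ s}) ≤ s * ν (D ∩ {x | V x ≤ s}) := by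
  have hDs : MeasurableSet (D ∩ {x | V x ≤ s}) := hD.inter (measurableSet_le hV measurable_const)
  rw [withDensity_apply _ hDs, ← setLIntegral_const]
  exact setLIntegral_mono measurable_const fun x hx => hx.2

lemma withDensity_setOf_le_zero (hV : Measurable V) : ν.withDensity V {x | V x ≤ 0} = 0 := by
  simpa using withDensity_inter_setOf_le (ν := ν) hV .univ 0

/-- The points of the triple of a principal cube `J` of height `aᵏ` at which `V ≤ κ aᵏ`. -/
def lowPart (V : ESp n → ℝ≥0∞) (κ a : ℝ≥0∞) (J : ℤ × DyadicCube n) : Set (ESp n) :=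
  J.2.triple ∩ {x | V x ≤ κ * a ^ J.1}

lemma pow_mul_withDensity_lowPart_le (hν : RestrictedAp ν p₁ C₁)
    (hW : RestrictedAp (ν.withDensity V) p₂ C₂) (hV : Measurable V) {r : ℕ}
    (hη : C₂ * ((2 ^ (n + 1)) ^ r) ^ p₂ * (κ * C₁ * η) < 1) {J : ℤ × DyadicCube n}
    (hJ : J.2 ∈ highCubes μ ν (a ^ J.1)) (hμJ : μ J.2.toSet ≤ η * ν.withDensity V J.2.toSet) :
    (1 + (C₁ * 2 ^ p₁)⁻¹) ^ r * ν.withDensity V (lowPart V κ a J) ≤ κ * C₁ * μ J.2.toSet := by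
  set F := lowPart V κ a J
  have hF : F ⊆ J.2.triple := inter_subset_left
  have hFm : MeasurableSet F :=
    J.2.measurableSet_triple.inter (measurableSet_le hV measurable_const)
  have hWF : ν.withDensity V F ≤ κ * a ^ J.1 * ν F :=
    withDensity_inter_setOf_le hV J.2.measurableSet_triple _
  have htriple : κ * a ^ J.1 * ν J.2.triple ≤ κ * C₁ * μ J.2.toSet := by
    calc κ * a ^ J.1 * ν J.2.triple ≤ κ * a ^ J.1 * (C₁ * ν J.2.toSet) := by
          gcongr
          exact hν.measure_triple_le J.2
      _ = κ * C₁ * (a ^ J.1 * ν J.2.toSet) := by ring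
      _ ≤ κ * C₁ * μ J.2.toSet := by gcongr; exact le_of_lt hJ
  have hsmall : ν.withDensity V F ≤ κ * C₁ * η * ν.withDensity V J.2.triple := by
    calc ν.withDensity V F ≤ κ * a ^ J.1 * ν J.2.triple := hWF.trans (by gcongr)
      _ ≤ κ * C₁ * (η * ν.withDensity V J.2.toSet) := htriple.trans (by gcongr)
      _ ≤ κ * C₁ * η * ν.withDensity V J.2.triple := by
          rw [← mul_assoc]
          gcongr
          exact J.2.toSet_subset_triple
  have hvol := hW.mul_volume_lt_of_measure_le hF hFm hsmall hη
  calc (1 + (C₁ * 2 ^ p₁)⁻¹) ^ r * ν.withDensity V F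
      ≤ (1 + (C₁ * 2 ^ p₁)⁻¹) ^ r * (κ * a ^ J.1 * ν F) := by gcongr
    _ = κ * a ^ J.1 * ((1 + (C₁ * 2 ^ p₁)⁻¹) ^ r * ν F) := by ring
    _ ≤ κ * a ^ J.1 * ν J.2.triple := by
        gcongr
        exact hν.halvingGain.pow_mul_measure_le hF r hvol
    _ ≤ κ * C₁ * μ J.2.toSet := htriple

/-- The principal cubes of `μ` relative to `ν` on which the average of `μ` relative to `W` lies
between `η'` and `η`. -/
def tierCubes (μ ν W : Measure (ESp n)) (a η η' : ℝ≥0∞) : Set (ℤ × DyadicCube n) :=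
  {J ∈ principalCubes μ ν a | μ J.2.toSet ≤ η * W J.2.toSet ∧ J.2 ∈ highCubes μ W η'}

lemma pow_mul_withDensity_biUnion_tierCubes_le [IsFiniteMeasure μ] (hn : 0 < n)
    (hν : RestrictedAp ν p₁ C₁) (hW : RestrictedAp (ν.withDensity V) p₂ C₂) (hV : Measurable V)
    (ha : C₁ * 2 ^ p₁ * C₁ < a) (ha1 : 1 ≤ a) (ha' : a ≠ ⊤) (hη' : η' ≠ 0) {r : ℕ}
    (hη : C₂ * ((2 ^ (n + 1)) ^ r) ^ p₂ * (κ * C₁ * η) < 1) :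
    (1 + (C₁ * 2 ^ p₁)⁻¹) ^ r * η' *
        ν.withDensity V (⋃ J ∈ tierCubes μ ν (ν.withDensity V) a η η', lowPart V κ a J) ≤
      κ * C₁ * η * (C₂ * 2 ^ p₂) * μ univ := by
  refine mul_measure_biUnion_le_of_freePart (hW.hasBoundedSizes_highCubes hn hη') ha1
    (fun J hJ => hJ.1) (fun J hJ => hJ.2.2) fun J ⟨hJ, hμJ, _⟩ => ?_
  calc (1 + (C₁ * 2 ^ p₁)⁻¹) ^ r * ν.withDensity V (lowPart V κ a J)
      ≤ κ * C₁ * μ J.2.toSet := pow_mul_withDensity_lowPart_le hν hW hV hη hJ.1 hμJ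
    _ ≤ κ * C₁ * (η * (C₂ * 2 ^ p₂ * ν.withDensity V (freePart μ ν a J))) := by
        gcongr
        exact hμJ.trans (by gcongr; exact hν.measure_le_mul_measure_freePart hW hn ha ha1 ha' hJ)
    _ = κ * C₁ * η * (C₂ * 2 ^ p₂) * ν.withDensity V (freePart μ ν a J) := by ring

lemma RestrictedAp.measure_biUnion_triple_highCubes_le [IsFiniteMeasure μ] (hn : 0 < n)
    (hW : RestrictedAp W p₂ C₂) (hθ : θ ≠ 0) (hθ' : θ ≠ ⊤) :
    W (⋃ I ∈ highCubes μ W θ, I.triple) ≤ C₂ / θ * μ univ := by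
  have hsub : ⋃ I ∈ highCubes μ W θ, I.triple ⊆
      ⋃ I ∈ maximalCubes (highCubes μ W θ), I.triple := iUnion₂_subset fun I hI =>
    let ⟨_, hJ, _, hIJ⟩ := (hW.hasBoundedSizes_highCubes hn hθ).exists_mem_maximalCubes hI
    hIJ.trans (subset_biUnion_of_mem (u := DyadicCube.triple) hJ)
  rw [← ENNReal.mul_div_right_comm, ENNReal.le_div_iff_mul_le (.inl hθ) (.inl hθ'), mul_comm]
  calc θ * W (⋃ I ∈ highCubes μ W θ, I.triple)
      ≤ θ * ∑' I : maximalCubes (highCubes μ W θ), W I.1.triple := by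
        gcongr
        exact (measure_mono hsub).trans (measure_biUnion_le _ (to_countable _) _)
    _ ≤ C₂ * ∑' I : maximalCubes (highCubes μ W θ), μ I.1.toSet := by
        rw [← ENNReal.tsum_mul_left, ← ENNReal.tsum_mul_left]
        refine ENNReal.tsum_le_tsum fun I => ?_
        calc θ * W I.1.triple ≤ θ * (C₂ * W I.1.toSet) := by gcongr; exact hW.measure_triple_le _
          _ = C₂ * (θ * W I.1.toSet) := by ring
          _ ≤ C₂ * μ I.1.toSet := by gcongr; exact le_of_lt I.2.1
    _ ≤ C₂ * μ univ := by
        rw [← measure_biUnion (to_countable _) (pairwiseDisjoint_maximalCubes _)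
          fun I _ => I.measurableSet_toSet]
        gcongr
        exact subset_univ _

lemma exists_pow_mul_lt_le {x y β : ℝ≥0∞} (hβ : β < 1) (hx : x ≠ ⊤) (hy : y ≠ 0) (hyx : y ≤ x) :
    ∃ r : ℕ, β ^ (r + 1) * x < y ∧ y ≤ β ^ r * x := by
  classical
  have hlim := ENNReal.Tendsto.mul_const (ENNReal.tendsto_pow_atTop_nhds_zero_of_lt_one hβ)
    (b := x) (Or.inr hx)
  rw [zero_mul] at hlim
  have hex : ∃ r : ℕ, β ^ r * x < y :=
    (hlim.eventually (gt_mem_nhds (pos_iff_ne_zero.2 hy))).exists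
  obtain ⟨r, hr⟩ : ∃ r, Nat.find hex = r + 1 :=
    Nat.exists_eq_succ_of_ne_zero fun h0 => hyx.not_gt (by simpa [h0] using Nat.find_spec hex)
  exact ⟨r, hr ▸ Nat.find_spec hex, not_lt.1 (Nat.find_min hex (by omega))⟩

lemma RestrictedAp.exists_mem_maximalCubes_highCubes [IsFiniteMeasure μ] (hn : 0 < n)
    (hν : RestrictedAp ν p₁ C₁) (ha : 1 < a) (ha' : a ≠ ⊤) {D : ℝ≥0∞}
    (hD : C₁ * (2 ^ n) ^ p₁ ≤ D) (hD0 : D ≠ 0) (hD' : D ≠ ⊤) {Q : Set (ESp n)} (hQ : IsCube Q)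
    {x : ESp n} (hx : x ∈ Q) {s : ℝ≥0∞} (hs0 : s ≠ 0) (hs : s * ν Q < μ Q) :
    ∃ k : ℤ, s ≤ D * a * a ^ k ∧ ∃ I ∈ maximalCubes (highCubes μ ν (a ^ k)), x ∈ I.triple := by
  have ha0 : a ≠ 0 := (zero_lt_one.trans ha).ne'
  have hνQ : ν Q ≠ 0 := fun h0 => hQ.volume_ne_zero (hν.volume_absolutelyContinuous h0)
  have hs' : s ≠ ⊤ := by
    rintro rfl
    rw [ENNReal.top_mul hνQ] at hs
    exact not_top_lt hs
  obtain ⟨k, hk, hk'⟩ := ENNReal.exists_mem_Ioc_zpow (ENNReal.div_ne_zero.2 ⟨hs0, hD'⟩)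
    (ENNReal.div_ne_top hs' hD0) ha ha'
  refine ⟨k, ?_, ?_⟩
  · rw [ENNReal.div_le_iff_le_mul (.inl hD0) (.inl hD'), ENNReal.zpow_add ha0 ha', zpow_one] at hk'
    exact hk'.trans_eq (by ring)
  · rw [ENNReal.lt_div_iff_mul_lt (.inl hD0) (.inl hD')] at hk
    obtain ⟨I, hI, hxI⟩ := hν.exists_mem_highCubes hQ hx hs (t := a ^ k) <| by
      calc C₁ * (2 ^ n) ^ p₁ * a ^ k ≤ D * a ^ k := by gcongr
        _ ≤ s := by rw [mul_comm]; exact hk.le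
    obtain ⟨J, hJ, -, hIJ⟩ := (hν.hasBoundedSizes_highCubes hn
      (ENNReal.zpow_pos ha0 ha' k).ne').exists_mem_maximalCubes hI
    exact ⟨J, hJ, hIJ hxI⟩

lemma setOf_mul_measure_lt_subset [IsFiniteMeasure μ] (hn : 0 < n) (hν : RestrictedAp ν p₁ C₁)
    (hW : RestrictedAp W p₂ C₂) (ha : 1 < a) (ha' : a ≠ ⊤) {D : ℝ≥0∞}
    (hD : C₁ * (2 ^ n) ^ p₁ ≤ D) (hD0 : D ≠ 0) (hD' : D ≠ ⊤) (hβ : β < 1) (hθ : θ ≠ ⊤) :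
    {x | ∃ Q, IsCube Q ∧ x ∈ Q ∧ V x * ν Q < μ Q} ⊆
      {x | V x ≤ 0} ∪ (⋃ I ∈ highCubes μ W θ, I.triple) ∪
        ⋃ r : ℕ, ⋃ J ∈ tierCubes μ ν W a (θ * β ^ r) (θ * β ^ (r + 1)), lowPart V (D * a) a J := by
  rintro x ⟨Q, hQ, hxQ, hlt⟩
  by_cases hV0 : V x = 0
  · exact .inl (.inl hV0.le)
  obtain ⟨k, hVk, I, hI, hxI⟩ :=
    hν.exists_mem_maximalCubes_highCubes hn ha ha' hD hD0 hD' hQ hxQ hV0 hlt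
  by_cases hθI : I ∈ highCubes μ W θ
  · exact .inl (.inr (mem_biUnion hθI hxI))
  have hμI : μ I.toSet ≠ 0 := (zero_le.trans_lt hI.1).ne'
  obtain ⟨r, hr, hr'⟩ := exists_pow_mul_lt_le hβ
    (ENNReal.mul_ne_top hθ (hW.measure_toSet_ne_top I)) hμI (not_lt.1 hθI)
  have htier : (k, I) ∈ tierCubes μ ν W a (θ * β ^ r) (θ * β ^ (r + 1)) :=
    ⟨hI, hr'.trans_eq (by ring), lt_of_eq_of_lt (by ring) hr⟩
  exact .inr (mem_iUnion.2 ⟨r, mem_biUnion htier ⟨hxI, hVk⟩⟩)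

lemma withDensity_biUnion_tierCubes_le [IsFiniteMeasure μ] (hn : 0 < n)
    (hν : RestrictedAp ν p₁ C₁) (hW : RestrictedAp (ν.withDensity V) p₂ C₂) (hV : Measurable V)
    (ha : C₁ * 2 ^ p₁ * C₁ < a) (ha1 : 1 ≤ a) (ha' : a ≠ ⊤) (hκ : κ ≠ ⊤)
    (hθ0 : θ ≠ 0) (hθ : θ ≠ ⊤) (hκθ : C₂ * (κ * C₁ * θ) < 1) (r : ℕ) :
    ν.withDensity V (⋃ J ∈ tierCubes μ ν (ν.withDensity V) a
        (θ * ((2 ^ (n + 1)) ^ p₂)⁻¹ ^ r) (θ * ((2 ^ (n + 1)) ^ p₂)⁻¹ ^ (r + 1)), lowPart V κ a J) ≤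
      (1 + (C₁ * 2 ^ p₁)⁻¹)⁻¹ ^ r * (κ * C₁ * (C₂ * 2 ^ p₂) * (2 ^ (n + 1)) ^ p₂ * μ univ) := by
  set b : ℝ≥0∞ := (2 ^ (n + 1)) ^ p₂ with hb
  set g : ℝ≥0∞ := 1 + (C₁ * 2 ^ p₁)⁻¹
  set η : ℝ≥0∞ := θ * b⁻¹ ^ (r + 1)
  set X : ℝ≥0∞ :=
    ν.withDensity V (⋃ J ∈ tierCubes μ ν (ν.withDensity V) a (θ * b⁻¹ ^ r) η, lowPart V κ a J)
  have hb0 : b ≠ 0 := by positivity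
  have hbt : b ≠ ⊤ := by finiteness
  have hη0 : η ≠ 0 := mul_ne_zero hθ0 (pow_ne_zero _ (ENNReal.inv_ne_zero.2 hbt))
  have hηt : η ≠ ⊤ := by finiteness
  have hη : θ * b⁻¹ ^ r = η * b := by
    rw [mul_assoc, pow_succ, mul_assoc, ENNReal.inv_mul_cancel hb0 hbt, mul_one]
  have hdecay : C₂ * ((2 ^ (n + 1)) ^ r) ^ p₂ * (κ * C₁ * (θ * b⁻¹ ^ r)) < 1 := by
    calc C₂ * ((2 ^ (n + 1)) ^ r) ^ p₂ * (κ * C₁ * (θ * b⁻¹ ^ r))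
        = C₂ * (κ * C₁ * θ) * (b * b⁻¹) ^ r := by rw [pow_right_comm, ← hb]; ring
      _ < 1 := by rwa [ENNReal.mul_inv_cancel hb0 hbt, one_pow, mul_one]
  have hX : g ^ r * X ≤ κ * C₁ * (C₂ * 2 ^ p₂) * b * μ univ := by
    refine (ENNReal.mul_le_mul_iff_right hη0 hηt).1 ?_
    calc η * (g ^ r * X) = g ^ r * η * X := by ring
      _ ≤ κ * C₁ * (θ * b⁻¹ ^ r) * (C₂ * 2 ^ p₂) * μ univ :=
          pow_mul_withDensity_biUnion_tierCubes_le hn hν hW hV ha ha1 ha' hη0 hdecay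
      _ = η * (κ * C₁ * (C₂ * 2 ^ p₂) * b * μ univ) := by rw [hη]; ring
  have hC₁ := hν.const_ne_top
  have hC₂ := hW.const_ne_top
  rw [← ENNReal.inv_pow, mul_comm _⁻¹, ← div_eq_mul_inv,
    ENNReal.le_div_iff_mul_le (.inl (by positivity)) (.inr (by finiteness)), mul_comm]
  exact hX

theorem RestrictedAp.exists_withDensity_setOf_mul_measure_lt_le (hn : 0 < n) (hp₂ : p₂ ≠ 0)
    (hν : RestrictedAp ν p₁ C₁) (hW : RestrictedAp (ν.withDensity V) p₂ C₂) (hV : Measurable V) :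
    ∃ K : ℝ≥0∞, K ≠ ⊤ ∧ ∀ (μ : Measure (ESp n)) [IsFiniteMeasure μ],
      ν.withDensity V {x | ∃ Q, IsCube Q ∧ x ∈ Q ∧ V x * ν Q < μ Q} ≤ K * μ univ := by
  have hC₁ := hν.const_ne_top
  have hC₂ := hW.const_ne_top
  -- `a` makes the principal cubes sparse, `θ` makes `{V ≤ D a aᵏ}` thin in those of the tiers.
  set D : ℝ≥0∞ := C₁ * (2 ^ n) ^ p₁ + 1
  set a : ℝ≥0∞ := C₁ * 2 ^ p₁ * C₁ + 2
  set g : ℝ≥0∞ := 1 + (C₁ * 2 ^ p₁)⁻¹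
  set θ : ℝ≥0∞ := (C₂ * (D * a * C₁) + 1)⁻¹
  set K₀ : ℝ≥0∞ := D * a * C₁ * (C₂ * 2 ^ p₂) * (2 ^ (n + 1)) ^ p₂
  have hD : D ≠ ⊤ := by finiteness
  have ha : a ≠ ⊤ := by finiteness
  have ha1 : 1 < a := ENNReal.one_lt_two.trans_le le_add_self
  have hθ0 : θ ≠ 0 := ENNReal.inv_ne_zero.2 (by finiteness)
  have hθ : θ ≠ ⊤ := ENNReal.inv_ne_top.2 (by positivity)
  have hκθ : C₂ * (D * a * C₁ * θ) < 1 := by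
    rw [← mul_assoc, ← div_eq_mul_inv]
    refine ENNReal.div_lt_of_lt_mul ?_
    rw [one_mul]
    exact ENNReal.lt_add_right (by finiteness) one_ne_zero
  have hβ : ((2 ^ (n + 1)) ^ p₂ : ℝ≥0∞)⁻¹ < 1 :=
    ENNReal.inv_lt_one.2 (one_lt_pow₀ (one_lt_pow₀ one_lt_two n.succ_ne_zero) hp₂)
  have hgeom : ∑' r : ℕ, g⁻¹ ^ r ≠ ⊤ := by
    rw [ENNReal.tsum_geometric]
    exact ENNReal.inv_ne_top.2 (tsub_pos_of_lt (ENNReal.inv_lt_one.2 hν.one_lt_gain)).ne'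
  refine ⟨C₂ / θ + (∑' r : ℕ, g⁻¹ ^ r) * K₀, by finiteness, fun μ _ => ?_⟩
  have hsub := setOf_mul_measure_lt_subset (μ := μ) (V := V) hn hν hW ha1 ha le_self_add
    (by positivity) hD hβ hθ
  have htiers := fun r => withDensity_biUnion_tierCubes_le (μ := μ) hn hν hW hV
    (ENNReal.lt_add_right (by finiteness) two_ne_zero) ha1.le ha (ENNReal.mul_ne_top hD ha)
    hθ0 hθ hκθ r
  calc ν.withDensity V {x | ∃ Q, IsCube Q ∧ x ∈ Q ∧ V x * ν Q < μ Q}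
      ≤ ν.withDensity V {x | V x ≤ 0} + C₂ / θ * μ univ + ∑' r : ℕ, g⁻¹ ^ r * (K₀ * μ univ) := by
        refine (measure_mono hsub).trans ((measure_union_le _ _).trans (add_le_add ?_ ?_))
        · exact (measure_union_le _ _).trans <| by
            gcongr
            exact hW.measure_biUnion_triple_highCubes_le hn hθ0 hθ
        · exact (measure_iUnion_le _).trans (ENNReal.tsum_le_tsum htiers)
    _ = (C₂ / θ + (∑' r : ℕ, g⁻¹ ^ r) * K₀) * μ univ := by
        rw [withDensity_setOf_le_zero hV, ENNReal.tsum_mul_right]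
        ring

end WeightedLevelSets

section Weights

variable {n m : ℕ} {q : ℝ} {w : ESp n → ℝ} {Q F : Set (ESp n)}

/-- The measure `w dx`, so that `wMeas w` becomes available to the measure theory library. -/
def weightMeasure (w : ESp n → ℝ) : Measure (ESp n) :=
  volume.withDensity fun x => ENNReal.ofReal (w x)

lemma weightMeasure_apply (w : ESp n → ℝ) (E : Set (ESp n)) : weightMeasure w E = wMeas w E :=
  withDensity_apply' _ _

instance : SigmaFinite (weightMeasure w) :=
  SigmaFinite.withDensity fun x => (w x).toNNReal

lemma volume_absolutelyContinuous_weightMeasure (hw : Measurable w)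
    (hpos : ∀ᵐ x ∂(volume : Measure (ESp n)), 0 < w x) : volume ≪ weightMeasure w :=
  withDensity_absolutelyContinuous' hw.ennreal_ofReal.aemeasurable <|
    hpos.mono fun _ hx => (ENNReal.ofReal_pos.2 hx).ne'

lemma weightMeasure_mul {v w : ESp n → ℝ} (hv : Measurable v) (hw : Measurable w)
    (hv0 : ∀ x, 0 ≤ v x) :
    weightMeasure (fun x => v x * w x) =
      (weightMeasure v).withDensity fun x => ENNReal.ofReal (w x) := by
  rw [weightMeasure, weightMeasure, ← withDensity_mul _ hv.ennreal_ofReal hw.ennreal_ofReal]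
  simp only [ENNReal.ofReal_mul (hv0 _), Pi.mul_def]

/-- The essential infimum of the weight `w` over `Q`. -/
def cubeInf (w : ESp n → ℝ) (Q : Set (ESp n)) : ℝ≥0∞ :=
  essInf (fun x => ENNReal.ofReal (w x)) (volume.restrict Q)

lemma ae_cubeInf_le (w : ESp n → ℝ) (Q : Set (ESp n)) :
    ∀ᵐ x ∂volume.restrict Q, cubeInf w Q ≤ ENNReal.ofReal (w x) :=
  ae_essInf_le

lemma cubeInf_ne_top (w : ESp n → ℝ) (hQ : volume Q ≠ 0) : cubeInf w Q ≠ ⊤ := by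
  have : (ae (volume.restrict Q)).NeBot := by rwa [ae_restrict_neBot]
  obtain ⟨x, hx⟩ := (ae_cubeInf_le w Q).exists
  exact ne_top_of_le_ne_top ENNReal.ofReal_ne_top hx

lemma cubeInf_rpow (hw : ∀ x, 0 ≤ w x) (hq : 0 < q) (Q : Set (ESp n)) :
    cubeInf (fun x => w x ^ q) Q = cubeInf w Q ^ q := by
  simp only [cubeInf, ← ENNReal.ofReal_rpow_of_nonneg (hw _) hq.le]
  have hiso := (ENNReal.orderIsoRpow q hq).essInf_apply (fun x => ENNReal.ofReal (w x))
    (volume.restrict Q)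
  simpa only [ENNReal.orderIsoRpow_apply] using hiso.symm

lemma cubeInf_mul_setLIntegral_le (w : ESp n → ℝ) (hFQ : F ⊆ Q) (g : ESp n → ℝ≥0∞) :
    cubeInf w Q * ∫⁻ x in F, g x ≤ ∫⁻ x in F, g x * ENNReal.ofReal (w x) := by
  refine (lintegral_const_mul_le _ _).trans (lintegral_mono_ae ?_)
  filter_upwards [ae_restrict_of_ae_restrict_of_subset hFQ (ae_cubeInf_le w Q)] with x hx
  rw [mul_comm]
  gcongr

lemma IsA1.exists_restrictedAp (h : IsA1 w) (hw : volume ≪ weightMeasure w) :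
    ∃ C, RestrictedAp (weightMeasure w) 1 C := by
  obtain ⟨C, hC, h⟩ := h
  refine ⟨_, RestrictedAp.of_isCube hw hC.ne fun Q hQ F hFQ _ => ?_⟩
  have hmean := h Q hQ
  rw [mul_comm, ← div_eq_mul_inv, ENNReal.div_le_iff hQ.volume_ne_zero hQ.volume_ne_top] at hmean
  have hinf : cubeInf w Q * volume F ≤ weightMeasure w F := by
    simpa [weightMeasure_apply, wMeas] using cubeInf_mul_setLIntegral_le w hFQ 1
  rw [weightMeasure_apply w Q, pow_one, pow_one]
  calc volume F * wMeas w Q ≤ volume F * (C * cubeInf w Q * volume Q) := by gcongr; exact hmean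
    _ = C * volume Q * (cubeInf w Q * volume F) := by ring
    _ ≤ C * volume Q * weightMeasure w F := by gcongr

lemma measure_univ_rpow_le_lintegral_mul {α : Type*} [MeasurableSpace α] {μ : Measure α}
    {g : α → ℝ≥0∞} (hg : AEMeasurable g μ) (hg0 : ∀ᵐ x ∂μ, g x ≠ 0) (hgt : ∀ᵐ x ∂μ, g x ≠ ⊤)
    {p : ℝ} (hp : 1 < p) :
    μ univ ^ p ≤ (∫⁻ x, g x ∂μ) * (∫⁻ x, g x ^ (1 - p / (p - 1)) ∂μ) ^ (p - 1) := by
  have hp₀ : 0 < p := by linarith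
  have hp₁ : p - 1 ≠ 0 := by linarith
  have hconj := Real.HolderConjugate.conjExponent hp
  have hone : μ univ = ∫⁻ x, ((g · ^ (1 / p)) * (g · ^ (-(1 / p)))) x ∂μ := by
    rw [← lintegral_one]
    refine lintegral_congr_ae ?_
    filter_upwards [hg0, hgt] with x hx0 hxt
    rw [Pi.mul_apply, ← ENNReal.rpow_add _ _ hx0 hxt, add_neg_cancel, ENNReal.rpow_zero]
  have hHolder := ENNReal.lintegral_mul_le_Lp_mul_Lq μ hconj (hg.pow_const (1 / p))
    (hg.pow_const (-(1 / p)))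
  have hexp : -(1 / p) * Real.conjExponent p = 1 - p / (p - 1) := by
    rw [Real.conjExponent]; field_simp; ring
  have hexp' : 1 / Real.conjExponent p * p = p - 1 := by
    rw [Real.conjExponent]; field_simp
  simp only [← hone, ← ENNReal.rpow_mul, one_div_mul_cancel hp₀.ne', ENNReal.rpow_one, hexp]
    at hHolder
  calc μ univ ^ p ≤ _ := ENNReal.rpow_le_rpow hHolder hp₀.le
    _ = _ := by
      rw [ENNReal.mul_rpow_of_nonneg _ _ hp₀.le, ← ENNReal.rpow_mul, ← ENNReal.rpow_mul,
        one_div_mul_cancel hp₀.ne', ENNReal.rpow_one, hexp']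

lemma natCeil_pow_mul_le_of_rpow_mul_le {a b x y C : ℝ≥0∞} {p : ℝ} (hp : 0 ≤ p) (hab : a ≤ b)
    (h : a ^ p * x ≤ C * b ^ p * y) : a ^ ⌈p⌉₊ * x ≤ C * b ^ ⌈p⌉₊ * y := by
  have hceil : 0 ≤ (⌈p⌉₊ : ℝ) - p := sub_nonneg.2 (Nat.le_ceil p)
  have hsplit (z : ℝ≥0∞) : z ^ ⌈p⌉₊ = z ^ ((⌈p⌉₊ : ℝ) - p) * z ^ p := by
    rw [← ENNReal.rpow_add_of_nonneg _ _ hceil hp, sub_add_cancel, ENNReal.rpow_natCast]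
  calc a ^ ⌈p⌉₊ * x = a ^ ((⌈p⌉₊ : ℝ) - p) * (a ^ p * x) := by rw [hsplit, mul_assoc]
    _ ≤ b ^ ((⌈p⌉₊ : ℝ) - p) * (C * b ^ p * y) := by gcongr
    _ = C * b ^ ⌈p⌉₊ * y := by rw [hsplit]; ring

lemma inv_mul_mul_inv_mul_rpow {a x y : ℝ≥0∞} (ha₀ : a ≠ 0) (ha : a ≠ ⊤) {p : ℝ} (hp : 1 ≤ p) :
    (a⁻¹ * x) * (a⁻¹ * y) ^ (p - 1) = x * y ^ (p - 1) / a ^ p := by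
  have hsplit : a⁻¹ ^ p = a⁻¹ * a⁻¹ ^ (p - 1) := by
    nth_rw 1 [← add_sub_cancel 1 p]
    rw [ENNReal.rpow_add _ _ (ENNReal.inv_ne_zero.2 ha) (ENNReal.inv_ne_top.2 ha₀),
      ENNReal.rpow_one]
  rw [ENNReal.mul_rpow_of_nonneg _ _ (sub_nonneg.2 hp), div_eq_mul_inv, ← ENNReal.inv_rpow, hsplit]
  ring

lemma IsAp.exists_restrictedAp {p : ℝ} (hp : 1 < p) (h : IsAp w p) (hw : Measurable w)
    (hpos : ∀ᵐ x ∂(volume : Measure (ESp n)), 0 < w x) :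
    ∃ C, RestrictedAp (weightMeasure w) ⌈p⌉₊ C := by
  obtain ⟨C, hC, h⟩ := h
  have hac := volume_absolutelyContinuous_weightMeasure hw hpos
  refine ⟨_, RestrictedAp.of_isCube hac hC.ne fun Q hQ F hFQ _ =>
    natCeil_pow_mul_le_of_rpow_mul_le (by linarith) (measure_mono hFQ) ?_⟩
  rw [weightMeasure_apply, weightMeasure_apply]
  set S : Set (ESp n) → ℝ≥0∞ := fun E => ∫⁻ x in E, ENNReal.ofReal (w x) ^ (1 - p / (p - 1))
  have hF : volume F ^ p ≤ wMeas w F * S F ^ (p - 1) := by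
    have hpos' : ∀ᵐ x ∂volume.restrict F, ENNReal.ofReal (w x) ≠ 0 :=
      ae_restrict_of_ae (hpos.mono fun _ hx => (ENNReal.ofReal_pos.2 hx).ne')
    simpa only [Measure.restrict_apply_univ, wMeas, S] using
      measure_univ_rpow_le_lintegral_mul hw.ennreal_ofReal.aemeasurable hpos'
        (ae_of_all _ fun _ => ENNReal.ofReal_ne_top) hp
  have hQ' : wMeas w Q * S Q ^ (p - 1) ≤ C * volume Q ^ p := by
    have hCQ := h Q hQ
    rwa [inv_mul_mul_inv_mul_rpow hQ.volume_ne_zero hQ.volume_ne_top hp.le,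
      ENNReal.div_le_iff_le_mul (.inr hC.ne)
      (.inl (ENNReal.rpow_ne_top_of_nonneg (by linarith) hQ.volume_ne_top))] at hCQ
  calc volume F ^ p * wMeas w Q ≤ wMeas w F * S F ^ (p - 1) * wMeas w Q := by gcongr
    _ ≤ wMeas w F * S Q ^ (p - 1) * wMeas w Q := by
      have hS : S F ≤ S Q := lintegral_mono_set hFQ
      gcongr
    _ = wMeas w F * (wMeas w Q * S Q ^ (p - 1)) := by ring
    _ ≤ wMeas w F * (C * volume Q ^ p) := by gcongr
    _ = C * volume Q ^ p * wMeas w F := by ring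

lemma IsAinfty.exists_restrictedAp (h : IsAinfty w) (hw : Measurable w)
    (hpos : ∀ᵐ x ∂(volume : Measure (ESp n)), 0 < w x) :
    ∃ p ≠ 0, ∃ C, RestrictedAp (weightMeasure w) p C := by
  rcases h with h | ⟨p, hp, h⟩
  · exact ⟨1, one_ne_zero,
      h.exists_restrictedAp (volume_absolutelyContinuous_weightMeasure hw hpos)⟩
  · exact ⟨⌈p⌉₊, (Nat.ceil_pos.2 (by linarith)).ne', h.exists_restrictedAp hp hw hpos⟩

end Weights

section ProductWeights

variable {n m : ℕ} {α q : ℝ} {u : Fin m → ESp n → ℝ} {v : ESp n → ℝ} {f : Fin m → ESp n → ℝ}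
  {Q : Set (ESp n)} {D K : ℝ≥0∞}

/-- The product weight `ν = ∏ᵢ uᵢ^q`. -/
def prodWeight (u : Fin m → ESp n → ℝ) (q : ℝ) (x : ESp n) : ℝ := ∏ i, u i x ^ q

lemma measurable_prodWeight (hu : ∀ i, Measurable (u i)) (q : ℝ) : Measurable (prodWeight u q) :=
  Finset.measurable_prod _ fun i _ => (hu i).pow_const q

lemma prodWeight_nonneg (hu : ∀ i x, 0 ≤ u i x) (q : ℝ) (x : ESp n) : 0 ≤ prodWeight u q x :=
  Finset.prod_nonneg fun i _ => Real.rpow_nonneg (hu i x) q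

lemma ae_prodWeight_pos (hu : ∀ i, ∀ᵐ x ∂(volume : Measure (ESp n)), 0 < u i x) (q : ℝ) :
    ∀ᵐ x ∂(volume : Measure (ESp n)), 0 < prodWeight u q x := by
  filter_upwards [ae_all_iff.2 hu] with x hx
  exact Finset.prod_pos fun i _ => Real.rpow_pos_of_pos (hx i) q

lemma prod_cubeInf_rpow_le (hu : ∀ i x, 0 ≤ u i x) (hq : 0 ≤ q) (Q : Set (ESp n)) :
    ∏ i, cubeInf (u i) Q ^ q ≤ cubeInf (prodWeight u q) Q := by
  refine le_essInf_of_ae_le _ ?_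
  filter_upwards [ae_all_iff.2 fun i => ae_cubeInf_le (u i) Q] with x hx
  rw [prodWeight, ENNReal.ofReal_prod_of_nonneg fun i _ => Real.rpow_nonneg (hu i x) q]
  refine Finset.prod_le_prod' fun i _ => ?_
  rw [← ENNReal.ofReal_rpow_of_nonneg (hu i x) hq]
  exact ENNReal.rpow_le_rpow (hx i) hq

/-- `D` is an admissible constant in the `m`-th root of the condition
`(u₁^{mq}, …, uₘ^{mq}) ∈ A_{(1,…,1)}`. -/
def ProdA1Const (u : Fin m → ESp n → ℝ) (q : ℝ) (D : ℝ≥0∞) : Prop :=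
  ∀ Q, IsCube Q → wMeas (prodWeight u q) Q ≤ D * volume Q * ∏ i, cubeInf (u i) Q ^ q

lemma A11.exists_prodA1Const (hm : 0 < m) (hq : 0 < q)
    (hu : ∀ i x, 0 ≤ u i x) (hA : A11 fun i x => u i x ^ ((m : ℝ) * q)) :
    ∃ D ≠ ⊤, ProdA1Const u q D := by
  obtain ⟨C, hC, h⟩ := hA
  have hm₀ : (0 : ℝ) < m := by exact_mod_cast hm
  refine ⟨C ^ (m : ℝ)⁻¹, by finiteness, fun Q hQ => ?_⟩
  have hroot (x : ESp n) : ∏ i, (u i x ^ ((m : ℝ) * q)) ^ (m : ℝ)⁻¹ = prodWeight u q x := by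
    refine Finset.prod_congr rfl fun i _ => ?_
    rw [← Real.rpow_mul (hu i x), mul_comm (m : ℝ), mul_inv_cancel_right₀ hm₀.ne']
  set P : ℝ≥0∞ := ∏ i, cubeInf (fun x => u i x ^ ((m : ℝ) * q)) Q
  have hinf i : cubeInf (fun x => u i x ^ ((m : ℝ) * q)) Q ≠ ⊤ :=
    cubeInf_ne_top _ hQ.volume_ne_zero
  have hmean : ((volume Q)⁻¹ * wMeas (prodWeight u q) Q) ^ (m : ℝ) ≤ C * P := by
    have hCQ : ((volume Q)⁻¹ *
        wMeas (fun x => ∏ i, (u i x ^ ((m : ℝ) * q)) ^ (m : ℝ)⁻¹) Q) ^ (m : ℝ) *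
          ∏ i, (cubeInf (fun x => u i x ^ ((m : ℝ) * q)) Q)⁻¹ ≤ C := h Q hQ
    simp only [hroot] at hCQ
    rwa [← ENNReal.prod_inv_distrib fun i _ j _ _ => .inr (hinf j), ← div_eq_mul_inv,
      ENNReal.div_le_iff_le_mul (.inr hC.ne)
        (.inl (ENNReal.prod_ne_top fun i _ => hinf i))] at hCQ
  have hP : P ^ (m : ℝ)⁻¹ = ∏ i, cubeInf (u i) Q ^ q := by
    rw [← ENNReal.prod_rpow_of_nonneg (by positivity)]
    refine Finset.prod_congr rfl fun i _ => ?_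
    rw [cubeInf_rpow (hu i) (by positivity), ← ENNReal.rpow_mul, mul_comm (m : ℝ),
      mul_inv_cancel_right₀ hm₀.ne']
  rw [← ENNReal.le_rpow_inv_iff hm₀, ENNReal.mul_rpow_of_nonneg _ _ (by positivity), hP, mul_comm,
    ← div_eq_mul_inv, ENNReal.div_le_iff hQ.volume_ne_zero hQ.volume_ne_top] at hmean
  exact hmean.trans_eq (by ring)

lemma ProdA1Const.isA1 (h : ProdA1Const u q D) (hD : D ≠ ⊤) (hu : ∀ i x, 0 ≤ u i x)
    (hq : 0 ≤ q) : IsA1 (prodWeight u q) := by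
  refine ⟨D, hD.lt_top, fun Q hQ => ?_⟩
  rw [mul_comm, ← div_eq_mul_inv, ENNReal.div_le_iff hQ.volume_ne_zero hQ.volume_ne_top]
  calc wMeas (prodWeight u q) Q ≤ D * volume Q * ∏ i, cubeInf (u i) Q ^ q := h Q hQ
    _ ≤ D * volume Q * cubeInf (prodWeight u q) Q := by
      gcongr
      exact prod_cubeInf_rpow_le hu hq Q
    _ = D * cubeInf (prodWeight u q) Q * volume Q := by ring

lemma ProdA1Const.wMeas_ne_top (h : ProdA1Const u q D) (hD : D ≠ ⊤) (hq : 0 ≤ q)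
    (hQ : IsCube Q) : wMeas (prodWeight u q) Q ≠ ⊤ := by
  have hvol := hQ.volume_ne_top
  have hinf : ∏ i, cubeInf (u i) Q ^ q ≠ ⊤ := ENNReal.prod_ne_top fun i _ =>
    ENNReal.rpow_ne_top_of_nonneg hq (cubeInf_ne_top _ hQ.volume_ne_zero)
  exact ne_top_of_le_ne_top (by finiteness) (h Q hQ)

/-- The quantity attached to a single cube whose supremum is `multiMα α f`. -/
def fracMean (α : ℝ) (f : Fin m → ESp n → ℝ) (Q : Set (ESp n)) : ℝ≥0∞ :=
  ∏ i, ((volume Q) ^ (1 - α / ((m : ℝ) * (n : ℝ))))⁻¹ * ∫⁻ y in Q, ENNReal.ofReal |f i y|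

lemma lt_multiMα_iff {x : ESp n} {t : ℝ≥0∞} :
    t < multiMα α f x ↔ ∃ Q, IsCube Q ∧ x ∈ Q ∧ t < fracMean α f Q := by
  simp only [multiMα, lt_iSup_iff, fracMean, exists_prop]

lemma fracMean_rpow (hq : 0 ≤ q) (hαq : (1 - α / ((m : ℝ) * n)) * m * q = 1) :
    fracMean α f Q ^ q = (volume Q)⁻¹ * ∏ i, (∫⁻ y in Q, ENNReal.ofReal |f i y|) ^ q := by
  rw [fracMean, Finset.prod_mul_distrib, ENNReal.mul_rpow_of_nonneg _ _ hq, Finset.prod_const,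
    Finset.card_univ, Fintype.card_fin, ENNReal.prod_rpow_of_nonneg hq, ← ENNReal.rpow_neg,
    ← ENNReal.rpow_natCast, ← ENNReal.rpow_mul, ← ENNReal.rpow_mul, neg_mul, ← mul_assoc, hαq,
    ENNReal.rpow_neg_one]

lemma ProdA1Const.fracMean_rpow_mul_wMeas_le (h : ProdA1Const u q D) (hq : 0 ≤ q)
    (hαq : (1 - α / ((m : ℝ) * n)) * m * q = 1) (hQ : IsCube Q) :
    fracMean α f Q ^ q * wMeas (prodWeight u q) Q ≤
      D * ∏ i, wMeas (fun x => |f i x| * u i x) Q ^ q := by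
  have hinf i : cubeInf (u i) Q * ∫⁻ y in Q, ENNReal.ofReal |f i y| ≤
      wMeas (fun x => |f i x| * u i x) Q := by
    simpa only [wMeas, ENNReal.ofReal_mul (abs_nonneg _)] using
      cubeInf_mul_setLIntegral_le (u i) subset_rfl fun x => ENNReal.ofReal |f i x|
  rw [fracMean_rpow hq hαq]
  calc (volume Q)⁻¹ * (∏ i, (∫⁻ y in Q, ENNReal.ofReal |f i y|) ^ q) * wMeas (prodWeight u q) Q
      ≤ (volume Q)⁻¹ * (∏ i, (∫⁻ y in Q, ENNReal.ofReal |f i y|) ^ q) *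
          (D * volume Q * ∏ i, cubeInf (u i) Q ^ q) := by gcongr; exact h Q hQ
    _ = (volume Q)⁻¹ * volume Q *
          (D * ((∏ i, cubeInf (u i) Q ^ q) * ∏ i, (∫⁻ y in Q, ENNReal.ofReal |f i y|) ^ q)) := by
        ring
    _ = D * ∏ i, (cubeInf (u i) Q * ∫⁻ y in Q, ENNReal.ofReal |f i y|) ^ q := by
        rw [ENNReal.inv_mul_cancel hQ.volume_ne_zero hQ.volume_ne_top, one_mul,
          ← Finset.prod_mul_distrib]
        simp only [ENNReal.mul_rpow_of_nonneg _ _ hq]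
    _ ≤ D * ∏ i, wMeas (fun x => |f i x| * u i x) Q ^ q := by
        gcongr with i
        exact hinf i

lemma wMeas_abs_mul_le_L1norm (f w : ESp n → ℝ) (Q : Set (ESp n)) :
    wMeas (fun x => |f x| * w x) Q ≤ L1norm f w :=
  setLIntegral_le_lintegral _ _

lemma prod_rpow_le_sum (hmq : 1 ≤ (m : ℝ) * q) (hq : 0 ≤ q) {y : Fin m → ℝ≥0∞}
    (hy : ∀ i, y i ≤ 1) : ∏ i, y i ^ q ≤ ∑ i, y i := by
  have : NeZero m := ⟨by rintro rfl; norm_num at hmq⟩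
  obtain ⟨j, hj⟩ := Finite.exists_max y
  calc ∏ i, y i ^ q ≤ ∏ _i : Fin m, y j ^ q :=
        Finset.prod_le_prod' fun i _ => ENNReal.rpow_le_rpow (hj i) hq
    _ = y j ^ ((m : ℝ) * q) := by
        rw [Finset.prod_const, Finset.card_univ, Fintype.card_fin, ← ENNReal.rpow_natCast,
          ← ENNReal.rpow_mul, mul_comm]
    _ ≤ y j ^ (1 : ℝ) := ENNReal.rpow_le_rpow_of_exponent_ge (hy j) hmq
    _ = y j := ENNReal.rpow_one _
    _ ≤ ∑ i, y i := Finset.single_le_sum (f := y) (fun _ _ => zero_le) (Finset.mem_univ j)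

lemma prod_rpow_le_prod_rpow_mul_sum (hmq : 1 ≤ (m : ℝ) * q) (hq : 0 ≤ q) {y A : Fin m → ℝ≥0∞}
    (hA₀ : ∀ i, A i ≠ 0) (hA : ∀ i, A i ≠ ⊤) (hy : ∀ i, y i ≤ A i) :
    ∏ i, y i ^ q ≤ (∏ i, A i ^ q) * ∑ i, (A i)⁻¹ * y i := by
  calc ∏ i, y i ^ q = (∏ i, A i ^ q) * ∏ i, ((A i)⁻¹ * y i) ^ q := by
        rw [← Finset.prod_mul_distrib]
        refine Finset.prod_congr rfl fun i _ => ?_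
        rw [← ENNReal.mul_rpow_of_nonneg _ _ hq, ← mul_assoc, ENNReal.mul_inv_cancel (hA₀ i) (hA i),
          one_mul]
    _ ≤ (∏ i, A i ^ q) * ∑ i, (A i)⁻¹ * y i := by
        refine mul_le_mul_right (prod_rpow_le_sum hmq hq fun i => ?_) _
        exact (mul_le_mul_right (hy i) _).trans (ENNReal.inv_mul_le_one _)

/-- The measure `∑ᵢ |fᵢ| uᵢ dx / ‖fᵢ‖_{L¹(uᵢ)}`, of total mass `m` when all the norms are nonzero
and finite. -/
def normalizedSum (f u : Fin m → ESp n → ℝ) : Measure (ESp n) :=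
  ∑ i, (L1norm (f i) (u i))⁻¹ • weightMeasure fun x => |f i x| * u i x

lemma normalizedSum_apply (f u : Fin m → ESp n → ℝ) (E : Set (ESp n)) :
    normalizedSum f u E =
      ∑ i, (L1norm (f i) (u i))⁻¹ * wMeas (fun x => |f i x| * u i x) E := by
  simp [normalizedSum, Measure.finsetSum_apply, weightMeasure_apply]

lemma normalizedSum_univ (hf₀ : ∀ i, L1norm (f i) (u i) ≠ 0) (hf : ∀ i, L1norm (f i) (u i) ≠ ⊤) :
    normalizedSum f u univ = m := by
  have huniv i : wMeas (fun x => |f i x| * u i x) univ = L1norm (f i) (u i) := setLIntegral_univ _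
  simp [normalizedSum_apply, huniv, ENNReal.inv_mul_cancel (hf₀ _) (hf _)]

lemma ProdA1Const.exists_mul_weightMeasure_lt (h : ProdA1Const u q D) (hD : D ≠ ⊤) (hq : 0 < q)
    (hmq : 1 ≤ (m : ℝ) * q) (hαq : (1 - α / ((m : ℝ) * n)) * m * q = 1)
    (hν : ∀ Q, IsCube Q → wMeas (prodWeight u q) Q ≠ 0)
    (hf₀ : ∀ i, L1norm (f i) (u i) ≠ 0) (hf : ∀ i, L1norm (f i) (u i) ≠ ⊤) {t : ℝ} (ht : 0 < t)
    {x : ESp n} (hvx : 0 < v x) (hx : ENNReal.ofReal t < multiMα α f x / ENNReal.ofReal (v x)) :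
    ∃ Q, IsCube Q ∧ x ∈ Q ∧ ENNReal.ofReal (v x ^ q) * weightMeasure (prodWeight u q) Q <
      ((D * (∏ i, L1norm (f i) (u i) ^ q) / ENNReal.ofReal t ^ q) • normalizedSum f u) Q := by
  rw [ENNReal.lt_div_iff_mul_lt (.inl (ENNReal.ofReal_pos.2 hvx).ne') (.inl ENNReal.ofReal_ne_top),
    lt_multiMα_iff] at hx
  obtain ⟨Q, hQ, hxQ, hlt⟩ := hx
  have hs₀ : ENNReal.ofReal t ^ q ≠ 0 := by simp [ht]
  have hs : ENNReal.ofReal t ^ q ≠ ⊤ := ENNReal.rpow_ne_top_of_nonneg hq.le ENNReal.ofReal_ne_top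
  refine ⟨Q, hQ, hxQ, ?_⟩
  rw [Measure.smul_apply, smul_eq_mul, ENNReal.mul_comm_div, ← mul_div_assoc,
    ENNReal.lt_div_iff_mul_lt (.inl hs₀) (.inl hs), weightMeasure_apply, normalizedSum_apply]
  calc ENNReal.ofReal (v x ^ q) * wMeas (prodWeight u q) Q * ENNReal.ofReal t ^ q
      = (ENNReal.ofReal t * ENNReal.ofReal (v x)) ^ q * wMeas (prodWeight u q) Q := by
        rw [ENNReal.mul_rpow_of_nonneg _ _ hq.le, ENNReal.ofReal_rpow_of_nonneg hvx.le hq.le]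
        ring
    _ < fracMean α f Q ^ q * wMeas (prodWeight u q) Q :=
        ENNReal.mul_lt_mul_left (hν Q hQ) (h.wMeas_ne_top hD hq.le hQ) (ENNReal.rpow_lt_rpow hlt hq)
    _ ≤ D * ∏ i, wMeas (fun x => |f i x| * u i x) Q ^ q :=
        h.fracMean_rpow_mul_wMeas_le hq.le hαq hQ
    _ ≤ D * ((∏ i, L1norm (f i) (u i) ^ q) *
          ∑ i, (L1norm (f i) (u i))⁻¹ * wMeas (fun x => |f i x| * u i x) Q) := by
        gcongr
        exact prod_rpow_le_prod_rpow_mul_sum hmq hq.le hf₀ hf fun i =>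
          wMeas_abs_mul_le_L1norm (f i) (u i) Q
    _ = _ := by ring

lemma ProdA1Const.rpow_mul_wMeas_le (h : ProdA1Const u q D) (hD : D ≠ ⊤) (hq : 0 < q)
    (hmq : 1 ≤ (m : ℝ) * q) (hαq : (1 - α / ((m : ℝ) * n)) * m * q = 1)
    (hν : ∀ Q, IsCube Q → wMeas (prodWeight u q) Q ≠ 0)
    (hv : ∀ᵐ x ∂(volume : Measure (ESp n)), 0 < v x) {w : ESp n → ℝ}
    (hK : ∀ (μ : Measure (ESp n)) [IsFiniteMeasure μ], weightMeasure w {x | ∃ Q, IsCube Q ∧ x ∈ Q ∧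
      ENNReal.ofReal (v x ^ q) * weightMeasure (prodWeight u q) Q < μ Q} ≤ K * μ univ)
    (hf₀ : ∀ i, L1norm (f i) (u i) ≠ 0) (hf : ∀ i, L1norm (f i) (u i) ≠ ⊤) {t : ℝ} (ht : 0 < t) :
    ENNReal.ofReal t ^ q *
        wMeas w {x | ENNReal.ofReal t < multiMα α f x / ENNReal.ofReal (v x)} ≤
      K * D * m * ∏ i, L1norm (f i) (u i) ^ q := by
  have hs₀ : ENNReal.ofReal t ^ q ≠ 0 := by simp [ht]
  have hs : ENNReal.ofReal t ^ q ≠ ⊤ := ENNReal.rpow_ne_top_of_nonneg hq.le ENNReal.ofReal_ne_top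
  set μ : Measure (ESp n) :=
    (D * (∏ i, L1norm (f i) (u i) ^ q) / ENNReal.ofReal t ^ q) • normalizedSum f u with hμ
  have hμ_univ : μ univ = D * (∏ i, L1norm (f i) (u i) ^ q) / ENNReal.ofReal t ^ q * m := by
    rw [hμ, Measure.smul_apply, smul_eq_mul, normalizedSum_univ hf₀ hf]
  have hμ_fin : IsFiniteMeasure μ := by
    have hprod : ∏ i, L1norm (f i) (u i) ^ q ≠ ⊤ := ENNReal.prod_ne_top fun i _ =>
      ENNReal.rpow_ne_top_of_nonneg hq.le (hf i)
    exact ⟨by rw [hμ_univ]; finiteness⟩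
  have hlevel : wMeas w {x | ENNReal.ofReal t < multiMα α f x / ENNReal.ofReal (v x)} ≤
      K * μ univ := by
    rw [← weightMeasure_apply]
    refine le_trans (measure_mono_ae ?_) (hK μ)
    filter_upwards [(withDensity_absolutelyContinuous _ _).ae_le hv] with x hvx hx
    exact h.exists_mul_weightMeasure_lt hD hq hmq hαq hν hf₀ hf ht hvx hx
  calc ENNReal.ofReal t ^ q * wMeas w _ ≤ ENNReal.ofReal t ^ q * (K * μ univ) := by gcongr
    _ = ENNReal.ofReal t ^ q * (ENNReal.ofReal t ^ q)⁻¹ *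
          (K * D * m * ∏ i, L1norm (f i) (u i) ^ q) := by
        rw [hμ_univ, div_eq_mul_inv]
        ring
    _ = K * D * m * ∏ i, L1norm (f i) (u i) ^ q := by
        rw [ENNReal.mul_inv_cancel hs₀ hs, one_mul]

lemma ProdA1Const.multiMα_eq_zero (h : ProdA1Const u q D) (hq : 0 < q)
    (hαq : (1 - α / ((m : ℝ) * n)) * m * q = 1)
    (hν : ∀ Q, IsCube Q → wMeas (prodWeight u q) Q ≠ 0) {i : Fin m}
    (hi : L1norm (f i) (u i) = 0) (x : ESp n) : multiMα α f x = 0 := by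
  by_contra hne
  obtain ⟨Q, hQ, -, hlt⟩ := lt_multiMα_iff.1 (pos_iff_ne_zero.2 hne)
  have hzero : ∏ j, wMeas (fun x => |f j x| * u j x) Q ^ q = 0 := by
    refine Finset.prod_eq_zero (Finset.mem_univ i) ?_
    rw [nonpos_iff_eq_zero.1 ((wMeas_abs_mul_le_L1norm (f i) (u i) Q).trans_eq hi),
      ENNReal.zero_rpow_of_pos hq]
  have hle := h.fracMean_rpow_mul_wMeas_le (f := f) hq.le hαq hQ
  rw [hzero, mul_zero, nonpos_iff_eq_zero] at hle
  exact mul_ne_zero (ENNReal.rpow_pos_of_nonneg hlt hq.le).ne' (hν Q hQ) hle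

lemma wnorm_le_of_rpow_mul_le {g : ESp n → ℝ≥0∞} {w : ESp n → ℝ} {R : ℝ≥0∞} (hq : 0 < q)
    (h : ∀ t : ℝ, 0 < t → ENNReal.ofReal t ^ q * wMeas w {x | ENNReal.ofReal t < g x} ≤ R) :
    wnorm g q w ≤ R ^ (1 / q) := by
  refine iSup₂_le fun t ht => ?_
  rw [one_div, ENNReal.le_rpow_inv_iff hq, ENNReal.mul_rpow_of_nonneg _ _ hq.le,
    ENNReal.rpow_inv_rpow hq.ne']
  exact h t ht

lemma wnorm_zero (hq : 0 < q) (w : ESp n → ℝ) : wnorm 0 q w = 0 := by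
  have h := wnorm_le_of_rpow_mul_le (g := 0) (w := w) (R := 0) hq fun t _ => by simp [wMeas]
  rwa [ENNReal.zero_rpow_of_pos (by positivity), nonpos_iff_eq_zero] at h

theorem ProdA1Const.wnorm_multiMα_div_le (h : ProdA1Const u q D) (hD : D ≠ ⊤) (hq : 0 < q)
    (hmq : 1 ≤ (m : ℝ) * q) (hαq : (1 - α / ((m : ℝ) * n)) * m * q = 1)
    (hν : ∀ Q, IsCube Q → wMeas (prodWeight u q) Q ≠ 0)
    (hv : ∀ᵐ x ∂(volume : Measure (ESp n)), 0 < v x) {w : ESp n → ℝ}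
    (hK : ∀ (μ : Measure (ESp n)) [IsFiniteMeasure μ], weightMeasure w {x | ∃ Q, IsCube Q ∧ x ∈ Q ∧
      ENNReal.ofReal (v x ^ q) * weightMeasure (prodWeight u q) Q < μ Q} ≤ K * μ univ)
    (f : Fin m → ESp n → ℝ) :
    wnorm (fun x => multiMα α f x / ENNReal.ofReal (v x)) q w ≤
      ((K * D * m) ^ (1 / q) + 1) * ∏ i, L1norm (f i) (u i) := by
  by_cases hf₀ : ∃ i, L1norm (f i) (u i) = 0
  · obtain ⟨i, hi⟩ := hf₀
    have hzero : (fun x => multiMα α f x / ENNReal.ofReal (v x)) = 0 := by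
      ext x
      simp [h.multiMα_eq_zero hq hαq hν hi x]
    rw [hzero, wnorm_zero hq]
    exact zero_le
  push Not at hf₀
  by_cases hf : ∃ i, L1norm (f i) (u i) = ⊤
  · obtain ⟨i, hi⟩ := hf
    have htop : ∏ i, L1norm (f i) (u i) = ⊤ := by
      rw [← Finset.mul_prod_erase _ _ (Finset.mem_univ i), hi,
        ENNReal.top_mul (Finset.prod_ne_zero_iff.2 fun j _ => hf₀ j)]
    rw [htop, ENNReal.mul_top (by simp)]
    exact le_top
  push Not at hf
  calc wnorm (fun x => multiMα α f x / ENNReal.ofReal (v x)) q w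
      ≤ (K * D * m * ∏ i, L1norm (f i) (u i) ^ q) ^ (1 / q) :=
        wnorm_le_of_rpow_mul_le hq fun t ht =>
          h.rpow_mul_wMeas_le hD hq hmq hαq hν hv hK hf₀ hf ht
    _ = (K * D * m) ^ (1 / q) * ∏ i, L1norm (f i) (u i) := by
        rw [ENNReal.mul_rpow_of_nonneg _ _ (by positivity), ENNReal.prod_rpow_of_nonneg hq.le,
          one_div, ENNReal.rpow_rpow_inv hq.ne']
    _ ≤ ((K * D * m) ^ (1 / q) + 1) * ∏ i, L1norm (f i) (u i) := by
        gcongr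
        exact le_self_add

end ProductWeights

/-- **Theorem on `𝓜_α`, first weight condition.**  Let `0 ≤ α < mn`, `q = n/(mn-α)`,
`ν = ∏ uᵢ^q`.  If `u⃗^{mq} ∈ A_{(1,…,1)}` and `ν v^q ∈ A_∞`, then there is `C` such that
`‖𝓜_α(f⃗)/v‖_{L^{q,∞}(ν v^q)} ≤ C ∏ ‖fᵢ‖_{L¹(uᵢ)}`. -/
theorem multilinear_fracMaximal_mixed_first {n m : ℕ} (hn : 0 < n) (hm : 0 < m)
    (α q : ℝ) (hα0 : 0 ≤ α) (hα : α < (m : ℝ) * (n : ℝ))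
    (hq : q = (n : ℝ) / ((m : ℝ) * (n : ℝ) - α))
    (u : Fin m → ESp n → ℝ) (v : ESp n → ℝ)
    (hu : ∀ i, IsWeight (u i)) (hv : IsWeight v)
    (hA : A11 (fun i x => u i x ^ ((m : ℝ) * q)))
    (hAinf : IsAinfty (fun x => (∏ i, u i x ^ q) * v x ^ q)) :
    ∃ C : ℝ≥0∞, C < ⊤ ∧
      ∀ f : Fin m → ESp n → ℝ,
        wnorm (fun x => multiMα α f x / ENNReal.ofReal (v x)) q
            (fun x => (∏ i, u i x ^ q) * v x ^ q)
          ≤ C * ∏ i, L1norm (f i) (u i) := by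
  have hm₀ : (0 : ℝ) < m := by exact_mod_cast hm
  have hn₀ : (0 : ℝ) < n := by exact_mod_cast hn
  have hd : 0 < (m : ℝ) * n - α := sub_pos.2 hα
  have hq₀ : 0 < q := by rw [hq]; exact div_pos hn₀ hd
  have hmq : 1 ≤ (m : ℝ) * q := by rw [hq, ← mul_div_assoc, one_le_div hd]; linarith
  have hαq : (1 - α / ((m : ℝ) * n)) * m * q = 1 := by
    rw [hq]; field_simp [hm₀.ne', hn₀.ne', hd.ne']
  have hu₀ i := (hu i).2.1
  have hν_meas : Measurable (prodWeight u q) := measurable_prodWeight (fun i => (hu i).1) q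
  have hν_pos := ae_prodWeight_pos (fun i => (hu i).2.2.1) q
  have hac := volume_absolutelyContinuous_weightMeasure hν_meas hν_pos
  have hν (Q) (hQ : IsCube Q) : wMeas (prodWeight u q) Q ≠ 0 := fun hzero =>
    hQ.volume_ne_zero (hac ((weightMeasure_apply _ Q).trans hzero))
  obtain ⟨D, hD, hDA⟩ := hA.exists_prodA1Const hm hq₀ hu₀
  obtain ⟨C₁, hν_Ap⟩ := (hDA.isA1 hD hu₀ hq₀.le).exists_restrictedAp hac
  obtain ⟨p, hp, C₂, hW_Ap⟩ := hAinf.exists_restrictedAp (hν_meas.mul (hv.1.pow_const q)) <| by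
    filter_upwards [hν_pos, hv.2.2.1] with x hνx hvx
    exact mul_pos hνx (Real.rpow_pos_of_pos hvx q)
  have hW := weightMeasure_mul hν_meas (hv.1.pow_const q) (prodWeight_nonneg hu₀ q)
  obtain ⟨K, hK, hcore⟩ := hν_Ap.exists_withDensity_setOf_mul_measure_lt_le hn hp (hW ▸ hW_Ap)
    (hv.1.pow_const q).ennreal_ofReal
  exact ⟨(K * D * m) ^ (1 / q) + 1, by finiteness,
    hDA.wnorm_multiMα_div_le hD hq₀ hmq hαq hν hv.2.2.1 (hW ▸ hcore)⟩

end
end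

section
/- (Pointwise domination of M_α by M) Let 0≤α<mn and q = n/(mn−α), and let u_1,…,u_m be weights on ℝ^n. Then for all nonnegative measurable functions f_1,…,f_m and every x ∈ ℝ^n, M_α(f_1,…,f_m)(x) ≤ M(f_1 u_1^{1−mq},…,f_m u_m^{1−mq})(x)^{1/(mq)} · ∏_{i=1}^m (∫_{ℝ^n} f_i u_i)^{α/(mn)}. -/
open MeasureTheory ENNReal Set

noncomputable section

/-!
With `p = mq`, so that `1 / p = 1 - α / (mn)`, split
`fᵢ = (fᵢ uᵢ ^ (1 - p)) ^ (1 / p) * (fᵢ uᵢ) ^ (1 - 1 / p)` and apply Hölder's inequality on a cube.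
The power of `|Q|` in `𝓜_α` is exactly the one that turns the first factor into an average; the
second one is bounded by an integral over the whole space.
-/

section WeightedHolder

variable {X : Type*} [MeasurableSpace X] {μ : Measure X}

theorem lintegral_mul_rpow_mul_rpow_le {f v w : X → ℝ≥0∞} (hf : AEMeasurable f μ)
    (hv : AEMeasurable v μ) (hw : AEMeasurable w μ) {a b : ℝ} (ha : 0 ≤ a) (hb : 0 ≤ b)
    (hab : a + b = 1) :
    ∫⁻ x, f x * (v x ^ a * w x ^ b) ∂μ ≤
      (∫⁻ x, f x * v x ∂μ) ^ a * (∫⁻ x, f x * w x ∂μ) ^ b := by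
  have integrand_eq (x : X) : f x * (v x ^ a * w x ^ b) = (f x * v x) ^ a * (f x * w x) ^ b := by
    rw [mul_rpow_of_nonneg _ _ ha, mul_rpow_of_nonneg _ _ hb, mul_mul_mul_comm,
      ← rpow_add_of_nonneg _ _ ha hb, hab, rpow_one]
  simp only [integrand_eq]
  exact lintegral_mul_norm_pow_le (hf.mul hv) (hf.mul hw) ha hb hab

theorem lintegral_le_rpow_lintegral_mul_weight {f w : X → ℝ≥0∞} (hf : AEMeasurable f μ)
    (hw : AEMeasurable w μ) (hw0 : ∀ᵐ x ∂μ, w x ≠ 0) (hw_top : ∀ᵐ x ∂μ, w x ≠ ∞)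
    {p : ℝ} (hp : 1 ≤ p) :
    ∫⁻ x, f x ∂μ ≤
      (∫⁻ x, f x * w x ^ (1 - p) ∂μ) ^ p⁻¹ * (∫⁻ x, f x * w x ∂μ) ^ (1 - p⁻¹) := by
  have hp0 : 0 < p := zero_lt_one.trans_le hp
  have weights_cancel : ∀ᵐ x ∂μ, (w x ^ (1 - p)) ^ p⁻¹ * w x ^ (1 - p⁻¹) = 1 := by
    filter_upwards [hw0, hw_top] with x hx0 hx_top
    have exponents_cancel : (1 - p) * p⁻¹ + (1 - p⁻¹) = 0 := by field_simp; ring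
    rw [← rpow_mul, ← rpow_add _ _ hx0 hx_top, exponents_cancel, rpow_zero]
  calc ∫⁻ x, f x ∂μ
      = ∫⁻ x, f x * ((w x ^ (1 - p)) ^ p⁻¹ * w x ^ (1 - p⁻¹)) ∂μ :=
        lintegral_congr_ae (weights_cancel.mono fun x hx => by simp only [hx, mul_one])
    _ ≤ _ := lintegral_mul_rpow_mul_rpow_le hf (hw.pow_const _) hw (inv_nonneg.2 hp0.le)
        (sub_nonneg.2 (inv_le_one_of_one_le₀ hp)) (add_sub_cancel _ _)

theorem inv_measure_rpow_mul_setLIntegral_le {f w : X → ℝ≥0∞} (hf : AEMeasurable f μ)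
    (hw : AEMeasurable w μ) (hw0 : ∀ᵐ x ∂μ, w x ≠ 0) (hw_top : ∀ᵐ x ∂μ, w x ≠ ∞)
    {p : ℝ} (hp : 1 ≤ p) (s : Set X) :
    (μ s ^ p⁻¹)⁻¹ * ∫⁻ x in s, f x ∂μ ≤
      ((μ s)⁻¹ * ∫⁻ x in s, f x * w x ^ (1 - p) ∂μ) ^ p⁻¹ *
        (∫⁻ x, f x * w x ∂μ) ^ (1 - p⁻¹) := by
  have hp_inv : 0 ≤ p⁻¹ := inv_nonneg.2 (zero_le_one.trans hp)
  have hp_conj : 0 ≤ 1 - p⁻¹ := sub_nonneg.2 (inv_le_one_of_one_le₀ hp)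
  rw [mul_rpow_of_nonneg _ _ hp_inv, inv_rpow, mul_assoc]
  gcongr
  calc ∫⁻ x in s, f x ∂μ
      ≤ (∫⁻ x in s, f x * w x ^ (1 - p) ∂μ) ^ p⁻¹ * (∫⁻ x in s, f x * w x ∂μ) ^ (1 - p⁻¹) :=
        lintegral_le_rpow_lintegral_mul_weight hf.restrict hw.restrict (ae_restrict_of_ae hw0)
          (ae_restrict_of_ae hw_top) hp
    _ ≤ _ := by gcongr; exact Measure.restrict_le_self

end WeightedHolder

theorem inv_volume_rpow_mul_setLIntegral_le_L1norm {n : ℕ} {f w : ESp n → ℝ}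
    (hf : AEMeasurable f) (hw : AEMeasurable w) (hw_pos : ∀ᵐ y, 0 < w y)
    {p : ℝ} (hp : 1 ≤ p) (Q : Set (ESp n)) :
    (volume Q ^ p⁻¹)⁻¹ * ∫⁻ y in Q, ENNReal.ofReal |f y| ≤
      ((volume Q)⁻¹ * ∫⁻ y in Q, ENNReal.ofReal |f y * w y ^ (1 - p)|) ^ p⁻¹ *
        L1norm f w ^ (1 - p⁻¹) := by
  have weighted_integrand_eq : ∀ᵐ y ∂volume.restrict Q, ENNReal.ofReal |f y * w y ^ (1 - p)| =
      ENNReal.ofReal |f y| * ENNReal.ofReal (w y) ^ (1 - p) := by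
    filter_upwards [ae_restrict_of_ae hw_pos] with y hy
    rw [abs_mul, abs_of_pos (Real.rpow_pos_of_pos hy _), ofReal_mul (abs_nonneg _),
      ofReal_rpow_of_pos hy]
  simp only [L1norm, ofReal_mul (abs_nonneg _)]
  rw [lintegral_congr_ae weighted_integrand_eq]
  exact inv_measure_rpow_mul_setLIntegral_le hf.abs.ennreal_ofReal hw.ennreal_ofReal
    (hw_pos.mono fun _ hy => (ofReal_pos.2 hy).ne') (.of_forall fun _ => ofReal_ne_top) hp Q

theorem prod_average_le_multiM {n m : ℕ} (f : Fin m → ESp n → ℝ) {x : ESp n} {Q : Set (ESp n)}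
    (hQ : IsCube Q) (hx : x ∈ Q) :
    ∏ i, (volume Q)⁻¹ * ∫⁻ y in Q, ENNReal.ofReal |f i y| ≤ multiM f x :=
  le_iSup₂_of_le Q hQ (le_iSup_of_le hx le_rfl)

theorem prod_inv_volume_rpow_mul_setLIntegral_le_multiM {n m : ℕ} {u f : Fin m → ESp n → ℝ}
    (hu : ∀ i, AEMeasurable (u i)) (hu_pos : ∀ i, ∀ᵐ y, 0 < u i y)
    (hf : ∀ i, AEMeasurable (f i)) {p : ℝ} (hp : 1 ≤ p)
    {x : ESp n} {Q : Set (ESp n)} (hQ : IsCube Q) (hx : x ∈ Q) :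
    ∏ i, (volume Q ^ p⁻¹)⁻¹ * ∫⁻ y in Q, ENNReal.ofReal |f i y| ≤
      multiM (fun i y => f i y * u i y ^ (1 - p)) x ^ p⁻¹ *
        ∏ i, L1norm (f i) (u i) ^ (1 - p⁻¹) := by
  have hp_inv : 0 ≤ p⁻¹ := inv_nonneg.2 (zero_le_one.trans hp)
  calc ∏ i, (volume Q ^ p⁻¹)⁻¹ * ∫⁻ y in Q, ENNReal.ofReal |f i y|
      ≤ ∏ i, ((volume Q)⁻¹ * ∫⁻ y in Q, ENNReal.ofReal |f i y * u i y ^ (1 - p)|) ^ p⁻¹ *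
          L1norm (f i) (u i) ^ (1 - p⁻¹) :=
        Finset.prod_le_prod' fun i _ =>
          inv_volume_rpow_mul_setLIntegral_le_L1norm (hf i) (hu i) (hu_pos i) hp Q
    _ = (∏ i, (volume Q)⁻¹ * ∫⁻ y in Q, ENNReal.ofReal |f i y * u i y ^ (1 - p)|) ^ p⁻¹ *
          ∏ i, L1norm (f i) (u i) ^ (1 - p⁻¹) := by
        rw [Finset.prod_mul_distrib, prod_rpow_of_nonneg hp_inv]
    _ ≤ _ := by
        gcongr
        exact prod_average_le_multiM _ hQ hx

theorem pointwise_fracMaximal_le_general {n m : ℕ} {α q : ℝ} (hα0 : 0 ≤ α)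
    (hα : α < (m : ℝ) * (n : ℝ)) (hq : q = (n : ℝ) / ((m : ℝ) * (n : ℝ) - α))
    {u f : Fin m → ESp n → ℝ} (hu : ∀ i, AEMeasurable (u i)) (hu_pos : ∀ i, ∀ᵐ y, 0 < u i y)
    (hf : ∀ i, AEMeasurable (f i)) (x : ESp n) :
    multiMα α f x ≤
      (multiM (fun i y => f i y * u i y ^ (1 - (m : ℝ) * q)) x) ^ (((m : ℝ) * q)⁻¹) *
        ∏ i, L1norm (f i) (u i) ^ (α / ((m : ℝ) * (n : ℝ))) := by
  have hmn : 0 < (m : ℝ) * n := hα0.trans_lt hα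
  have hp : 1 ≤ (m : ℝ) * q := by
    rw [hq, ← mul_div_assoc, one_le_div (sub_pos.2 hα)]
    exact sub_le_self _ hα0
  have hp_inv : 1 - α / (m * n) = ((m : ℝ) * q)⁻¹ := by
    rw [hq, ← mul_div_assoc, inv_div, sub_div, div_self hmn.ne']
  have hα_div : α / (m * n) = 1 - ((m : ℝ) * q)⁻¹ := by linarith
  rw [multiMα, hp_inv, hα_div]
  exact iSup₂_le fun Q hQ => iSup_le fun hx =>
    prod_inv_volume_rpow_mul_setLIntegral_le_multiM hu hu_pos hf hp hQ hx

/-- **Pointwise domination of `𝓜_α` by `𝓜`.**  Let `0 ≤ α < mn` and `q = n/(mn-α)`.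
Then for nonnegative measurable `f₁,…,f_m` and every `x`,
`𝓜_α(f⃗)(x) ≤ 𝓜(f₁u₁^{1-mq},…,f_mu_m^{1-mq})(x)^{1/(mq)} ∏ (∫ fᵢuᵢ)^{α/(mn)}`. -/
theorem pointwise_fracMaximal_le {n m : ℕ} (hn : 0 < n) (hm : 0 < m)
    (α q : ℝ) (hα0 : 0 ≤ α) (hα : α < (m : ℝ) * (n : ℝ))
    (hq : q = (n : ℝ) / ((m : ℝ) * (n : ℝ) - α))
    (u : Fin m → ESp n → ℝ) (hu : ∀ i, IsWeight (u i))
    (f : Fin m → ESp n → ℝ) (hfm : ∀ i, Measurable (f i)) (hf0 : ∀ i x, 0 ≤ f i x)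
    (x : ESp n) :
    multiMα α f x ≤
      (multiM (fun i y => f i y * u i y ^ (1 - (m : ℝ) * q)) x) ^ (((m : ℝ) * q)⁻¹) *
        ∏ i, (∫⁻ y, ENNReal.ofReal (f i y * u i y)) ^ (α / ((m : ℝ) * (n : ℝ))) := by
  simpa only [L1norm, abs_of_nonneg (hf0 _ _)] using
    pointwise_fracMaximal_le_general hα0 hα hq (fun i => (hu i).1.aemeasurable)
      (fun i => (hu i).2.2.1) (fun i => (hfm i).aemeasurable) x

end
end
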